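/- arXiv:1805.10922 — 2 statements merged into one kernel-verified Lean document; each statement's English description precedes it below -/
import Mathlib

section
/- Let g ∈ 𝒮(ℝ^d) be nonzero and u ∈ 𝒮'(ℝ^d). Then u ∈ 𝒮(ℝ^d) if and only if for every N ≥ 0 there is C_N > 0 with |𝒯_g u(x,ξ)| ≤ C_N ⟨(x,ξ)⟩^{−N} for all (x,ξ) ∈ ℝ^{2d}. -/
namespace FBI
open MeasureTheory SchwartzMap Filter Topology
open scoped ContDiff

theorem exists_extend {S B : Type*} [AddCommGroup S] [Module ℂ S] [NormedAddCommGroup B]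
    [NormedSpace ℂ B] (J : S →ₗ[ℂ] B) (hJ : Function.Injective J) (u : S →ₗ[ℂ] ℂ) (C : ℝ)
    (h : ∀ ψ, ‖u ψ‖ ≤ C * ‖J ψ‖) : ∃ w : B →L[ℂ] ℂ, ∀ ψ, w (J ψ) = u ψ := by
  let e := LinearEquiv.ofInjective J hJ
  let v : LinearMap.range J →L[ℂ] ℂ :=
    LinearMap.mkContinuous (u ∘ₗ e.symm.toLinearMap) C (by
      intro b
      obtain ⟨ψ, rfl⟩ := e.surjective b
      simpa [e] using h ψ)
  obtain ⟨w, hw, -⟩ := exists_extension_norm_eq _ v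
  refine ⟨w, fun ψ => ?_⟩
  have := hw (e ψ)
  simpa [v, e] using this

section Pettis
variable {E : Type*} [NormedAddCommGroup E] [NormedSpace ℝ E]

/-- The function `y ↦ ‖y‖^k • D^l ψ(y)` as a bounded continuous function. -/
noncomputable def jetFun (k l : ℕ) (f : SchwartzMap E ℂ) :
    BoundedContinuousFunction E (ContinuousMultilinearMap ℝ (fun _ : Fin l => E) ℂ) :=
  BoundedContinuousFunction.ofNormedAddCommGroup
      (fun y => (‖y‖ ^ k) • iteratedFDeriv ℝ l f y)
      ((continuous_norm.pow k).smul ((f.smooth ⊤).continuous_iteratedFDeriv (by exact_mod_cast le_top)))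
      (SchwartzMap.seminorm ℂ k l f)
      (fun y => by
        rw [norm_smul, norm_pow, norm_norm]
        exact SchwartzMap.le_seminorm ℂ k l f y)

theorem jetFun_apply (k l : ℕ) (f : SchwartzMap E ℂ) (y : E) :
    jetFun k l f y = (‖y‖ ^ k) • iteratedFDeriv ℝ l f y := rfl

theorem norm_jetFun_le (k l : ℕ) (f : SchwartzMap E ℂ) :
    ‖jetFun k l f‖ ≤ SchwartzMap.seminorm ℂ k l f :=
  BoundedContinuousFunction.norm_ofNormedAddCommGroup_le _ (apply_nonneg _ _) _

/-- The map `ψ ↦ (y ↦ ‖y‖^k • D^l ψ(y))` into bounded continuous functions. -/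
noncomputable def jet (k l : ℕ) :
    SchwartzMap E ℂ →L[ℂ] BoundedContinuousFunction E (ContinuousMultilinearMap ℝ (fun _ : Fin l => E) ℂ) :=
  SchwartzMap.mkCLMtoNormedSpace (σ := RingHom.id ℂ) (D := E) (E := ℂ) (jetFun k l)
    (by
      intro f g
      ext1 y
      simp only [jetFun_apply, BoundedContinuousFunction.coe_add, Pi.add_apply]
      rw [FunLike.coe_add, iteratedFDeriv_add_apply ((f.smooth l).contDiffAt) ((g.smooth l).contDiffAt), smul_add])
    (by
      intro a f
      ext1 y
      simp only [jetFun_apply, BoundedContinuousFunction.coe_smul]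
      rw [FunLike.coe_smul, iteratedFDeriv_const_smul_apply ((f.smooth l).contDiffAt), smul_comm]
      rfl)
    ⟨{(k, l)}, 1, zero_le_one, fun f => by
      simp only [Finset.sup_singleton, one_mul]
      exact norm_jetFun_le k l f⟩

/-- The Banach space receiving finitely many jets. -/
def JetSpace (E : Type*) [NormedAddCommGroup E] [NormedSpace ℝ E] (s : Finset (ℕ × ℕ)) :=
  ∀ i : s, BoundedContinuousFunction E (ContinuousMultilinearMap ℝ (fun _ : Fin i.1.2 => E) ℂ)

noncomputable instance (s : Finset (ℕ × ℕ)) : NormedAddCommGroup (JetSpace E s) :=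
  inferInstanceAs (NormedAddCommGroup (∀ i : s, BoundedContinuousFunction E
    (ContinuousMultilinearMap ℝ (fun _ : Fin i.1.2 => E) ℂ)))

noncomputable instance (s : Finset (ℕ × ℕ)) : NormedSpace ℂ (JetSpace E s) :=
  inferInstanceAs (NormedSpace ℂ (∀ i : s, BoundedContinuousFunction E
    (ContinuousMultilinearMap ℝ (fun _ : Fin i.1.2 => E) ℂ)))

instance (s : Finset (ℕ × ℕ)) : CompleteSpace (JetSpace E s) :=
  inferInstanceAs (CompleteSpace (∀ i : s, BoundedContinuousFunction E
    (ContinuousMultilinearMap ℝ (fun _ : Fin i.1.2 => E) ℂ)))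

theorem norm_jetSpace_le (s : Finset (ℕ × ℕ)) (b : JetSpace E s) {r : ℝ} (hr : 0 ≤ r)
    (h : ∀ i, ‖b i‖ ≤ r) : ‖b‖ ≤ r :=
  (pi_norm_le_iff_of_nonneg (ι := s) (G := fun i : s => BoundedContinuousFunction E
          (ContinuousMultilinearMap ℝ (fun _ : Fin i.1.2 => E) ℂ)) (x := b) hr).2 h

theorem le_norm_jetSpace (s : Finset (ℕ × ℕ)) (b : JetSpace E s) (i : s) : ‖b i‖ ≤ ‖b‖ :=
  norm_le_pi_norm (ι := s) (G := fun i : s => BoundedContinuousFunction E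
          (ContinuousMultilinearMap ℝ (fun _ : Fin i.1.2 => E) ℂ)) b i

/-- Evaluation of one jet at one point. -/
noncomputable def jetEval (s : Finset (ℕ × ℕ)) (i : s) (y : E) :
    JetSpace E s →L[ℂ] ContinuousMultilinearMap ℝ (fun _ : Fin i.1.2 => E) ℂ :=
  LinearMap.mkContinuous (𝕜 := ℂ) (𝕜₂ := ℂ) (σ := RingHom.id ℂ) (E := JetSpace E s)
    (F := ContinuousMultilinearMap ℝ (fun _ : Fin i.1.2 => E) ℂ)
    { toFun := fun b => b i y
      map_add' := fun _ _ => rfl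
      map_smul' := fun _ _ => rfl } 1 (fun b => by
        rw [one_mul]
        exact ((b i).norm_coe_le_norm y).trans (le_norm_jetSpace s b i))

/-- Finitely many jets at once. -/
noncomputable def jets (s : Finset (ℕ × ℕ)) : SchwartzMap E ℂ →L[ℂ] JetSpace E s :=
  SchwartzMap.mkCLMtoNormedSpace (σ := RingHom.id ℂ) (D := E) (E := ℂ)
    (fun f => fun i : s => jet i.1.1 i.1.2 f)
    (fun f g => by funext i; exact map_add (jet i.1.1 i.1.2) f g)
    (fun a f => by funext i; exact map_smul (jet i.1.1 i.1.2) a f)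
    ⟨s, 1, zero_le_one, fun f => by
      rw [one_mul]
      refine norm_jetSpace_le s _ (apply_nonneg _ _) fun i => ?_
      refine (norm_jetFun_le i.1.1 i.1.2 f).trans ?_
      exact Seminorm.le_def.1 (Finset.le_sup (f := schwartzSeminormFamily ℂ E ℂ) i.2) f⟩

theorem jets_apply (s : Finset (ℕ × ℕ)) (f : SchwartzMap E ℂ) (i : s) :
    jets s f i = jet i.1.1 i.1.2 f := rfl

theorem jet_apply (k l : ℕ) (f : SchwartzMap E ℂ) (y : E) :
    jet k l f y = (‖y‖ ^ k) • iteratedFDeriv ℝ l f y := rfl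

theorem norm_jet_le (k l : ℕ) (f : SchwartzMap E ℂ) :
    ‖jet k l f‖ ≤ SchwartzMap.seminorm ℂ k l f :=
  norm_jetFun_le k l f

theorem le_norm_jet (k l : ℕ) (f : SchwartzMap E ℂ) :
    SchwartzMap.seminorm ℂ k l f ≤ ‖jet k l f‖ := by
  refine SchwartzMap.seminorm_le_bound ℂ k l f (norm_nonneg (jet k l f)) fun y => ?_
  have := (jet k l f).norm_coe_le_norm y
  rwa [jet_apply, norm_smul, norm_pow, norm_norm] at this

variable {Z : Type*} [TopologicalSpace Z] [MeasurableSpace Z] [OpensMeasurableSpace Z]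
  [SecondCountableTopology Z] {μ : Measure Z}

theorem continuous_iteratedFDeriv_param {Φ : Z → SchwartzMap E ℂ} (hc : Continuous Φ) (l : ℕ) (y : E) :
    Continuous fun z => iteratedFDeriv ℝ l (Φ z) y := by
  have h : Continuous fun z => jet 0 l (Φ z) y :=
    (BoundedContinuousFunction.evalCLM ℂ y).continuous.comp ((jet 0 l).continuous.comp hc)
  simpa [jet_apply] using h

theorem integrable_iteratedFDeriv_param {Φ : Z → SchwartzMap E ℂ} (hc : Continuous Φ)
    (hi : ∀ k l, Integrable (fun z => SchwartzMap.seminorm ℂ k l (Φ z)) μ) (l : ℕ) (y : E) :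
    Integrable (fun z => iteratedFDeriv ℝ l (Φ z) y) μ := by
  refine (hi 0 l).mono' (continuous_iteratedFDeriv_param hc l y).aestronglyMeasurable
    (Eventually.of_forall fun z => ?_)
  exact SchwartzMap.norm_iteratedFDeriv_le_seminorm ℂ (Φ z) l y

theorem hasFDerivAt_param {Φ : Z → SchwartzMap E ℂ} (hc : Continuous Φ)
    (hi : ∀ k l, Integrable (fun z => SchwartzMap.seminorm ℂ k l (Φ z)) μ) (l : ℕ) (y : E) :
    HasFDerivAt (fun y => ∫ z, iteratedFDeriv ℝ l (Φ z) y ∂μ)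
      (∫ z, fderiv ℝ (iteratedFDeriv ℝ l (Φ z)) y ∂μ) y := by
  refine hasFDerivAt_integral_of_dominated_of_fderiv_le (s := Set.univ)
    (F := fun y z => iteratedFDeriv ℝ l (Φ z) y)
    (F' := fun y z => fderiv ℝ (iteratedFDeriv ℝ l (Φ z)) y)
    (bound := fun z => SchwartzMap.seminorm ℂ 0 (l+1) (Φ z)) univ_mem
    (Eventually.of_forall fun y => (continuous_iteratedFDeriv_param hc l y).aestronglyMeasurable)
    (integrable_iteratedFDeriv_param hc hi l y) ?_ ?_ (hi 0 (l+1)) ?_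
  · have h := continuous_iteratedFDeriv_param hc (l+1) y
    have : (fun z => fderiv ℝ (iteratedFDeriv ℝ l (Φ z)) y) = fun z =>
      (continuousMultilinearCurryLeftEquiv ℝ (fun _ : Fin (l+1) => E) ℂ)
        (iteratedFDeriv ℝ (l+1) (Φ z) y) := by
      ext1 z
      rw [iteratedFDeriv_succ_eq_comp_left]; simp
    rw [this]
    exact ((LinearIsometryEquiv.continuous _).comp h).aestronglyMeasurable
  · refine Eventually.of_forall fun z y _ => ?_
    rw [norm_fderiv_iteratedFDeriv]
    exact SchwartzMap.norm_iteratedFDeriv_le_seminorm ℂ (Φ z) (l+1) y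
  · refine Eventually.of_forall fun z y _ => ?_
    exact (((Φ z).smooth ⊤).differentiable_iteratedFDeriv
      (by exact_mod_cast ENat.natCast_lt_top l) y).hasFDerivAt

theorem iteratedFDeriv_param {Φ : Z → SchwartzMap E ℂ} (hc : Continuous Φ)
    (hi : ∀ k l, Integrable (fun z => SchwartzMap.seminorm ℂ k l (Φ z)) μ) (l : ℕ) :
    iteratedFDeriv ℝ l (fun y => ∫ z, Φ z y ∂μ) = fun y => ∫ z, iteratedFDeriv ℝ l (Φ z) y ∂μ := by
  induction l with
  | zero =>
    ext1 y
    rw [iteratedFDeriv_zero_eq_comp]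
    simp only [Function.comp, iteratedFDeriv_zero_eq_comp]
    exact ((continuousMultilinearCurryFin0 ℝ E ℂ).symm.toContinuousLinearEquiv.integral_comp_comm _).symm
  | succ l ih =>
    ext1 y
    rw [iteratedFDeriv_succ_eq_comp_left, ih]
    simp only [Function.comp]
    rw [(hasFDerivAt_param hc hi l y).fderiv]
    simp only [iteratedFDeriv_succ_eq_comp_left, Function.comp]
    exact (ContinuousLinearEquiv.integral_comp_comm (𝕜 := ℝ) (μ := μ)
      (E := E →L[ℝ] ContinuousMultilinearMap ℝ (fun _ : Fin l => E) ℂ)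
      (F := ContinuousMultilinearMap ℝ (fun _ : Fin (l+1) => E) ℂ)
      (continuousMultilinearCurryLeftEquiv ℝ (fun _ : Fin (l+1) => E) ℂ).symm.toContinuousLinearEquiv
      (fun z => fderiv ℝ (iteratedFDeriv ℝ l (Φ z)) y)).symm

theorem exists_pettis {Φ : Z → SchwartzMap E ℂ} (hc : Continuous Φ)
    (hi : ∀ k l, Integrable (fun z => SchwartzMap.seminorm ℂ k l (Φ z)) μ) :
    ∃ Ψ : SchwartzMap E ℂ, (∀ y, Ψ y = ∫ z, Φ z y ∂μ) ∧
      ∀ u : SchwartzMap E ℂ →L[ℂ] ℂ, u Ψ = ∫ z, u (Φ z) ∂μ := by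
  have hD := iteratedFDeriv_param hc hi
  let Ψ : SchwartzMap E ℂ :=
    { toFun := fun y => ∫ z, Φ z y ∂μ
      smooth' := by
        refine contDiff_of_differentiable_iteratedFDeriv fun l _ => ?_
        rw [hD]
        exact fun y => (hasFDerivAt_param hc hi l y).differentiableAt
      decay' := by
        intro k l
        refine ⟨∫ z, SchwartzMap.seminorm ℂ k l (Φ z) ∂μ, fun y => ?_⟩
        rw [hD, ← norm_norm y, ← norm_pow, ← norm_smul, ← integral_smul]
        refine norm_integral_le_of_norm_le (hi k l) (Eventually.of_forall fun z => ?_)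
        rw [norm_smul, norm_pow, norm_norm]
        exact SchwartzMap.le_seminorm ℂ k l (Φ z) y }
  refine ⟨Ψ, fun y => rfl, fun u => ?_⟩
  obtain ⟨s, C, -, hC⟩ := Seminorm.bound_of_continuous (schwartz_withSeminorms ℂ E ℂ)
    ((normSeminorm ℂ ℂ).comp u.toLinearMap) (continuous_norm.comp u.continuous)
  let s' : Finset (ℕ × ℕ) := insert (0, 0) s
  let J : SchwartzMap E ℂ →L[ℂ] JetSpace E s' := jets s'
  have hJle : ∀ ψ, ‖u ψ‖ ≤ C * ‖J ψ‖ := by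
    intro ψ
    refine (hC ψ).trans ?_
    rw [smul_apply]
    change (C:ℝ) * _ ≤ _
    refine mul_le_mul_of_nonneg_left ?_ C.2
    refine Seminorm.finset_sup_apply_le (norm_nonneg _) fun i his => ?_
    refine (le_norm_jet i.1 i.2 ψ).trans ?_
    exact le_norm_jetSpace s' (J ψ) ⟨i, Finset.mem_insert_of_mem his⟩
  have hJinj : Function.Injective J := by
    intro a b hab
    ext y
    have h := congrFun hab ⟨(0,0), Finset.mem_insert_self _ _⟩
    have h2 : jet 0 0 a y = jet 0 0 b y := by
      change jet 0 0 a = jet 0 0 b at h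
      rw [h]
    simp only [jet_apply, pow_zero, one_smul] at h2
    have := congrArg (fun m => m 0) h2
    simpa using this
  obtain ⟨w, hwJ⟩ := exists_extend (B := JetSpace E s') (J : SchwartzMap E ℂ →ₗ[ℂ] JetSpace E s') hJinj u.toLinearMap C hJle
  replace hwJ : ∀ ψ, w (J ψ) = u ψ := hwJ
  have hcJ : Continuous fun z => J (Φ z) := J.continuous.comp hc
  have hJint : Integrable (fun z => J (Φ z)) μ := by
    refine (integrable_finset_sum Finset.univ fun (i : s') _ => hi i.1.1 i.1.2).mono'
      hcJ.aestronglyMeasurable (Eventually.of_forall fun z => ?_)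
    refine norm_jetSpace_le s' _ (Finset.sum_nonneg fun i _ => apply_nonneg _ _) fun i => ?_
    refine (norm_jet_le i.1.1 i.1.2 (Φ z)).trans ?_
    exact Finset.single_le_sum (f := fun i : s' => SchwartzMap.seminorm ℂ i.1.1 i.1.2 (Φ z))
      (fun i _ => apply_nonneg _ _) (Finset.mem_univ i)
  have hJΨ : J Ψ = ∫ z, J (Φ z) ∂μ := by
    funext i
    refine BoundedContinuousFunction.ext fun y => ?_
    have h2 : ∫ z, jet i.1.1 i.1.2 (Φ z) y ∂μ = (∫ z, J (Φ z) ∂μ) i y :=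
      (jetEval s' i y).integral_comp_comm hJint
    rw [← h2]
    simp only [jet_apply]
    rw [integral_smul]
    change (‖y‖ ^ i.1.1) • iteratedFDeriv ℝ i.1.2 (fun y => ∫ z, Φ z y ∂μ) y = _
    rw [hD]
  rw [← hwJ Ψ, hJΨ, ← w.integral_comp_comm hJint]
  simp only [hwJ]

end Pettis
end FBI

namespace FBI
open MeasureTheory SchwartzMap Filter Topology FourierTransform
open scoped ContDiff

section Mod
variable {V : Type*} [NormedAddCommGroup V] [InnerProductSpace ℝ V]

theorem leibniz_pointwise (k l m : ℕ) {A : ℝ} (hA : 0 ≤ A) {a : V → ℂ} (ha : ContDiff ℝ ∞ a)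
    (hb : ∀ j ≤ l, ∀ y, ‖iteratedFDeriv ℝ j a y‖ ≤ A * (1 + ‖y‖) ^ m) (h : SchwartzMap V ℂ) (y : V) :
    (1 + ‖y‖) ^ k * ‖iteratedFDeriv ℝ l (fun y => a y * h y) y‖ ≤
      2 ^ l * 2 ^ (k + m) * A * (Finset.Iic (k + m, l)).sup (schwartzSeminormFamily ℂ V ℂ) h := by
  have h1 := norm_iteratedFDeriv_mul_le (𝕜 := ℝ) ha (h.smooth ⊤) y (n := l) (by exact_mod_cast le_top)
  set Q := (Finset.Iic (k + m, l)).sup (schwartzSeminormFamily ℂ V ℂ) h with hQ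
  calc _ ≤ (1 + ‖y‖) ^ k * ∑ i ∈ Finset.range (l + 1), (l.choose i : ℝ) * ‖iteratedFDeriv ℝ i a y‖ *
        ‖iteratedFDeriv ℝ (l - i) h y‖ := by gcongr
    _ = ∑ i ∈ Finset.range (l + 1), (1 + ‖y‖) ^ k * ((l.choose i : ℝ) * ‖iteratedFDeriv ℝ i a y‖ *
        ‖iteratedFDeriv ℝ (l - i) h y‖) := by rw [Finset.mul_sum]
    _ ≤ ∑ i ∈ Finset.range (l + 1), (l.choose i : ℝ) * (A * (2 ^ (k + m) * Q)) := by
        refine Finset.sum_le_sum fun i hi => ?_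
        have hil : i ≤ l := Nat.lt_succ_iff.1 (Finset.mem_range.1 hi)
        have h2 : (1 + ‖y‖) ^ (k + m) * ‖iteratedFDeriv ℝ (l - i) h y‖ ≤ 2 ^ (k + m) * Q :=
          one_add_le_sup_seminorm_apply (𝕜 := ℂ) (m := (k + m, l)) le_rfl (Nat.sub_le l i) h y
        calc (1 + ‖y‖) ^ k * ((l.choose i : ℝ) * ‖iteratedFDeriv ℝ i a y‖ *
              ‖iteratedFDeriv ℝ (l - i) h y‖)
            ≤ (1 + ‖y‖) ^ k * ((l.choose i : ℝ) * (A * (1 + ‖y‖) ^ m) *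
              ‖iteratedFDeriv ℝ (l - i) h y‖) := by
              gcongr
              exact hb i hil y
          _ = (l.choose i : ℝ) * (A * ((1 + ‖y‖) ^ (k + m) * ‖iteratedFDeriv ℝ (l - i) h y‖)) := by
              ring
          _ ≤ _ := by gcongr
    _ = _ := by
        rw [← Finset.sum_mul, ← Nat.cast_sum, Nat.sum_range_choose]
        push_cast; ring

/-- The modulation character. -/
noncomputable def chr (a y : V) : ℂ := Complex.exp (Complex.I * (inner ℝ y a : ℝ))

theorem norm_chr (a y : V) : ‖chr a y‖ = 1 := by
  rw [chr, mul_comm, Complex.norm_exp_ofReal_mul_I]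

theorem iteratedDeriv_expI (j : ℕ) :
    iteratedDeriv j (fun t : ℝ => Complex.exp (Complex.I * t)) =
      fun t : ℝ => Complex.I ^ j * Complex.exp (Complex.I * t) := by
  induction j with
  | zero => simp
  | succ j ih =>
    rw [iteratedDeriv_succ, ih]
    ext t
    have h : HasDerivAt (fun t : ℝ => Complex.exp (Complex.I * t))
        (Complex.exp (Complex.I * t) * (Complex.I * 1)) t :=
      ((Complex.ofRealCLM.hasDerivAt (x := t)).const_mul Complex.I).cexp
    rw [(h.const_mul _).deriv]
    ring

theorem contDiff_expI : ContDiff ℝ ∞ (fun t : ℝ => Complex.exp (Complex.I * t)) :=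
  (contDiff_const.mul Complex.ofRealCLM.contDiff).cexp

theorem chr_eq (a : V) : chr a = (fun t : ℝ => Complex.exp (Complex.I * t)) ∘ (innerSL ℝ a) := by
  ext y; simp [chr, real_inner_comm]

theorem contDiff_chr (a : V) : ContDiff ℝ ∞ (chr a) := by
  rw [chr_eq]
  exact contDiff_expI.comp (innerSL ℝ a).contDiff

theorem norm_iteratedFDeriv_chr_le (a : V) (j : ℕ) (y : V) :
    ‖iteratedFDeriv ℝ j (chr a) y‖ ≤ ‖a‖ ^ j := by
  rw [chr_eq, ContinuousLinearMap.iteratedFDeriv_comp_right (innerSL ℝ a) contDiff_expI y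
    (i := j) (by exact_mod_cast le_top)]
  refine (ContinuousMultilinearMap.norm_compContinuousLinearMap_le _ _).trans ?_
  rw [norm_iteratedFDeriv_eq_norm_iteratedDeriv, iteratedDeriv_expI]
  simp only [norm_mul, norm_pow, Complex.norm_I, one_pow, one_mul, Finset.prod_const,
    Finset.card_univ, Fintype.card_fin, innerSL_apply_norm]
  rw [mul_comm Complex.I, Complex.norm_exp_ofReal_mul_I, one_mul]

theorem norm_iteratedFDeriv_chr_sub_le {a : V} (ha : ‖a‖ ≤ 1) (j : ℕ) (y : V) :
    ‖iteratedFDeriv ℝ j (fun y => chr a y - 1) y‖ ≤ ‖a‖ * (1 + ‖y‖) ^ 1 := by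
  rcases j with _ | j
  · rw [norm_iteratedFDeriv_zero, chr]
    refine Real.norm_exp_I_mul_ofReal_sub_one_le.trans ?_
    refine (norm_inner_le_norm y a).trans ?_
    nlinarith [norm_nonneg y, norm_nonneg a]
  · have : iteratedFDeriv ℝ (j+1) (fun y => chr a y - 1) y = iteratedFDeriv ℝ (j+1) (chr a) y := by
      have := iteratedFDeriv_sub_apply (𝕜 := ℝ) (i := j+1) (x := y) (f := chr a) (g := fun _ => (1:ℂ))
        ((contDiff_chr a).contDiffAt.of_le (by exact_mod_cast le_top)) contDiffAt_const
      have e : (chr a - fun _ => (1:ℂ)) = fun y => chr a y - 1 := rfl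
      rw [e] at this
      rw [this, iteratedFDeriv_const_of_ne (by omega)]; simp
    rw [this]
    refine (norm_iteratedFDeriv_chr_le a (j+1) y).trans ?_
    rw [pow_succ', pow_one]
    have : ‖a‖ ^ j ≤ 1 := pow_le_one₀ (norm_nonneg _) ha
    gcongr
    linarith [norm_nonneg y]

theorem chr_temperate (a : V) : (chr a).HasTemperateGrowth :=
  ⟨contDiff_chr a, fun n => ⟨0, ‖a‖ ^ n, fun y => by simpa using norm_iteratedFDeriv_chr_le a n y⟩⟩

/-- Modulation on Schwartz space. -/
noncomputable def Mod (a : V) : SchwartzMap V ℂ →L[ℂ] SchwartzMap V ℂ :=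
  SchwartzMap.smulLeftCLM ℂ (chr a)

theorem Mod_apply (a : V) (h : SchwartzMap V ℂ) (y : V) : Mod a h y = chr a y * h y := by
  rw [Mod, SchwartzMap.smulLeftCLM_apply_apply (chr_temperate a), smul_eq_mul]

theorem Mod_coe (a : V) (h : SchwartzMap V ℂ) : (Mod a h : V → ℂ) = fun y => chr a y * h y :=
  funext (Mod_apply a h)

theorem norm_iteratedFDeriv_chr_le' (a : V) (l j : ℕ) (hj : j ≤ l) (y : V) :
    ‖iteratedFDeriv ℝ j (chr a) y‖ ≤ (1 + ‖a‖) ^ l * (1 + ‖y‖) ^ 0 := by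
  rw [pow_zero, mul_one]
  refine (norm_iteratedFDeriv_chr_le a j y).trans ?_
  calc ‖a‖ ^ j ≤ (1 + ‖a‖) ^ j := by gcongr; linarith
    _ ≤ _ := pow_le_pow_right₀ (by linarith [norm_nonneg a]) hj

theorem Mod_pointwise (k l : ℕ) (a : V) (h : SchwartzMap V ℂ) (y : V) :
    (1 + ‖y‖) ^ k * ‖iteratedFDeriv ℝ l (Mod a h) y‖ ≤
      2 ^ l * 2 ^ k * (1 + ‖a‖) ^ l * (Finset.Iic (k, l)).sup (schwartzSeminormFamily ℂ V ℂ) h := by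
  rw [Mod_coe]
  exact leibniz_pointwise k l 0 (by positivity) (contDiff_chr a)
    (norm_iteratedFDeriv_chr_le' a l) h y

theorem tendsto_zero_of_seminorm {Z : Type*} {F : Filter Z} {f : Z → SchwartzMap V ℂ}
    (h : ∀ k l, Tendsto (fun z => SchwartzMap.seminorm ℂ k l (f z)) F (𝓝 0)) :
    Tendsto f F (𝓝 0) := by
  rw [(schwartz_withSeminorms ℂ V ℂ).tendsto_nhds]
  rintro ⟨k, l⟩ ε hε
  simp only [sub_zero]
  exact (h k l).eventually_lt_const hε

theorem pow_mul_le_of_one_add (k : ℕ) (y : V) {b M : ℝ} (hb : 0 ≤ b) (h : (1 + ‖y‖) ^ k * b ≤ M) :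
    ‖y‖ ^ k * b ≤ M :=
  le_trans (by gcongr; linarith) h

theorem continuous_supSeminorm (s : Finset (ℕ × ℕ)) :
    Continuous fun h : SchwartzMap V ℂ => s.sup (schwartzSeminormFamily ℂ V ℂ) h := by
  have : Continuous ⇑(s.sup (schwartzSeminormFamily ℂ V ℂ)) := by
    refine Seminorm.continuous_of_le (q := ∑ i ∈ s, schwartzSeminormFamily ℂ V ℂ i) ?_
      (Seminorm.finset_sup_le_sum _ _)
    have : ⇑(∑ i ∈ s, schwartzSeminormFamily ℂ V ℂ i) =
        fun x => ∑ i ∈ s, schwartzSeminormFamily ℂ V ℂ i x := by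
      ext x
      simp
    rw [this]
    exact continuous_finset_sum _ fun i _ => (schwartz_withSeminorms ℂ V ℂ).continuous_seminorm i
  exact this

theorem tendsto_Mod_sub (h : SchwartzMap V ℂ) : Tendsto (fun a : V => Mod a h - h) (𝓝 0) (𝓝 0) := by
  refine tendsto_zero_of_seminorm fun k l => ?_
  have hlim : Tendsto (fun a : V => 2 ^ l * 2 ^ (k + 1) * ‖a‖ *
      (Finset.Iic (k + 1, l)).sup (schwartzSeminormFamily ℂ V ℂ) h) (𝓝 0) (𝓝 0) := by
    have : Continuous (fun a : V => 2 ^ l * 2 ^ (k + 1) * ‖a‖ *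
      (Finset.Iic (k + 1, l)).sup (schwartzSeminormFamily ℂ V ℂ) h) := by fun_prop
    simpa using this.tendsto 0
  refine tendsto_of_tendsto_of_tendsto_of_le_of_le' tendsto_const_nhds hlim
    (Eventually.of_forall fun a => apply_nonneg _ _) ?_
  filter_upwards [Metric.closedBall_mem_nhds (0 : V) one_pos] with a ha
  have ha' : ‖a‖ ≤ 1 := by simpa using ha
  refine SchwartzMap.seminorm_le_bound ℂ k l _ (by positivity) fun y => ?_
  have hcoe : ((Mod a h - h : SchwartzMap V ℂ) : V → ℂ) = fun y => (chr a y - 1) * h y := by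
    ext y
    rw [sub_mul, one_mul, ← Mod_apply]; rfl
  rw [hcoe]
  refine pow_mul_le_of_one_add k y (norm_nonneg _) ?_
  exact leibniz_pointwise k l 1 (norm_nonneg a) ((contDiff_chr a).sub contDiff_const)
    (fun j _ y => norm_iteratedFDeriv_chr_sub_le ha' j y) h y

theorem chr_add (a b y : V) : chr (a + b) y = chr a y * chr b y := by
  simp only [chr, ← Complex.exp_add, inner_add_right]; push_cast; ring_nf

theorem continuous_Mod : Continuous fun p : V × SchwartzMap V ℂ => Mod p.1 p.2 := by
  rw [continuous_iff_continuousAt]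
  rintro ⟨a₀, h₀⟩
  have h1 : Tendsto (fun p : V × SchwartzMap V ℂ => Mod p.1 (p.2 - h₀)) (𝓝 (a₀, h₀)) (𝓝 0) := by
    refine tendsto_zero_of_seminorm fun k l => ?_
    have hlim : Tendsto (fun p : V × SchwartzMap V ℂ => 2 ^ l * 2 ^ k * (1 + ‖p.1‖) ^ l *
        (Finset.Iic (k, l)).sup (schwartzSeminormFamily ℂ V ℂ) (p.2 - h₀)) (𝓝 (a₀, h₀)) (𝓝 0) := by
      have hc : Continuous (fun p : V × SchwartzMap V ℂ => 2 ^ l * 2 ^ k * (1 + ‖p.1‖) ^ l *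
        (Finset.Iic (k, l)).sup (schwartzSeminormFamily ℂ V ℂ) (p.2 - h₀)) :=
        (continuous_const.mul ((continuous_const.add continuous_fst.norm).pow l)).mul
          ((continuous_supSeminorm _).comp (continuous_snd.sub continuous_const))
      simpa using hc.tendsto (a₀, h₀)
    refine tendsto_of_tendsto_of_tendsto_of_le_of_le tendsto_const_nhds hlim
      (fun a => apply_nonneg _ _) fun p => ?_
    exact SchwartzMap.seminorm_le_bound ℂ k l _ (by positivity) fun y =>
      pow_mul_le_of_one_add k y (norm_nonneg _) (Mod_pointwise k l p.1 (p.2 - h₀) y)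
  have h2 : Tendsto (fun p : V × SchwartzMap V ℂ => Mod a₀ (Mod (p.1 - a₀) h₀ - h₀))
      (𝓝 (a₀, h₀)) (𝓝 0) := by
    have h3 : Tendsto (fun p : V × SchwartzMap V ℂ => p.1 - a₀) (𝓝 (a₀, h₀)) (𝓝 0) := by
      have : Continuous (fun p : V × SchwartzMap V ℂ => p.1 - a₀) := by fun_prop
      simpa using this.tendsto (a₀, h₀)
    have h4 := ((Mod a₀).continuous.tendsto 0).comp ((tendsto_Mod_sub h₀).comp h3)
    rwa [map_zero] at h4
  have h5 := (h1.add h2).add_const (Mod a₀ h₀)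
  rw [add_zero, zero_add] at h5
  refine h5.congr fun p => ?_
  ext y
  have : chr p.1 y = chr a₀ y * chr (p.1 - a₀) y := by rw [← chr_add]; simp
  simp only [add_apply, sub_apply, Mod_apply, this]
  ring

end Mod
end FBI

namespace FBI
open MeasureTheory SchwartzMap Filter Topology FourierTransform
open scoped ContDiff

section Trans
variable {V : Type*} [NormedAddCommGroup V] [InnerProductSpace ℝ V] [FiniteDimensional ℝ V]
  [MeasurableSpace V] [BorelSpace V]

/-- Translation on Schwartz space. -/
noncomputable def Tr (x : V) : SchwartzMap V ℂ →L[ℂ] SchwartzMap V ℂ :=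
  SchwartzMap.compSubConstCLM ℂ x

theorem Tr_apply (x : V) (h : SchwartzMap V ℂ) (y : V) : Tr x h y = h (y - x) := rfl

theorem fourier_Tr (x : V) (h : SchwartzMap V ℂ) :
    𝓕 (Tr x h) = Mod (-(2 * Real.pi) • x) (𝓕 h) := by
  ext w
  rw [Mod_apply, fourier_coe, fourier_coe, Real.fourier_eq', Real.fourier_eq',
    ← integral_const_mul]
  rw [← integral_sub_right_eq_self (fun v => chr (-(2 * Real.pi) • x) w *
    (Complex.exp ((↑(-2 * Real.pi * inner ℝ v w) : ℂ) * Complex.I) • h v)) x]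
  congr 1 with v
  rw [Tr_apply, smul_eq_mul, smul_eq_mul, ← mul_assoc]
  congr 1
  rw [chr, ← Complex.exp_add]
  congr 1
  rw [inner_sub_left, inner_smul_right, real_inner_comm x w]
  push_cast; ring

theorem fourier_Mod (ξ : V) (h : SchwartzMap V ℂ) :
    𝓕 (Mod ξ h) = Tr ((2 * Real.pi)⁻¹ • ξ) (𝓕 h) := by
  ext w
  rw [Tr_apply, fourier_coe, fourier_coe, Real.fourier_eq', Real.fourier_eq']
  congr 1 with v
  rw [Mod_apply, smul_eq_mul, smul_eq_mul, ← mul_assoc]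
  congr 1
  rw [chr, ← Complex.exp_add]
  congr 1
  rw [inner_sub_right, inner_smul_right]
  have : (Real.pi : ℂ) ≠ 0 := by exact_mod_cast Real.pi_ne_zero
  push_cast; field_simp; ring

theorem continuous_TrMod (h : SchwartzMap V ℂ) :
    Continuous fun p : V × V => Tr p.1 (Mod p.2 h) := by
  have h1 : ∀ p : V × V, Tr p.1 (Mod p.2 h) =
      𝓕⁻ (Mod (-(2 * Real.pi) • p.1) (𝓕 (Mod p.2 h))) := by
    intro p
    rw [← fourier_Tr, FourierTransform.fourierInv_fourier_eq]
  simp_rw [h1]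
  have h2 : Continuous fun p : V × V => Mod p.2 h :=
    continuous_Mod.comp (continuous_snd.prodMk continuous_const)
  have h3 : Continuous fun p : V × V => 𝓕 (Mod p.2 h) :=
    (fourierCLM ℂ (SchwartzMap V ℂ)).continuous.comp h2
  have h4 : Continuous fun p : V × V => Mod (-(2 * Real.pi) • p.1) (𝓕 (Mod p.2 h)) :=
    continuous_Mod.comp ((continuous_fst.const_smul _).prodMk h3)
  exact (fourierInvCLM ℂ (SchwartzMap V ℂ)).continuous.comp h4

theorem one_add_norm_le_mul (x y : V) : 1 + ‖x‖ ≤ (1 + ‖y‖) * (1 + ‖y - x‖) := by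
  have : ‖x‖ ≤ ‖y‖ + ‖y - x‖ := by
    have := norm_sub_le y (y - x)
    simpa using this
  nlinarith [norm_nonneg y, norm_nonneg (y - x)]

theorem one_add_norm_le_mul' (x y : V) : 1 + ‖y‖ ≤ (1 + ‖x‖) * (1 + ‖y - x‖) := by
  have : ‖y‖ ≤ ‖x‖ + ‖y - x‖ := by
    have := norm_add_le x (y - x)
    simpa using this
  nlinarith [norm_nonneg x, norm_nonneg (y - x)]

theorem seminorm_TrMod_le (h : SchwartzMap V ℂ) (k l : ℕ) : ∃ C n, 0 ≤ C ∧ ∀ p : V × V,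
    SchwartzMap.seminorm ℂ k l (Tr p.1 (Mod p.2 h)) ≤ C * (1 + ‖p‖) ^ (n : ℕ) := by
  set Q := (Finset.Iic (k, l)).sup (schwartzSeminormFamily ℂ V ℂ) h with hQ
  have hQ0 : 0 ≤ Q := apply_nonneg _ _
  refine ⟨2 ^ l * 2 ^ k * Q, k + l, by positivity, fun p => ?_⟩
  refine SchwartzMap.seminorm_le_bound ℂ k l _ (by positivity) fun y => ?_
  refine pow_mul_le_of_one_add k y (norm_nonneg _) ?_
  have hc : ((Tr p.1 (Mod p.2 h) : SchwartzMap V ℂ) : V → ℂ) = fun y => Mod p.2 h (y - p.1) := rfl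
  rw [hc, iteratedFDeriv_comp_sub]
  have h1 := Mod_pointwise k l p.2 h (y - p.1)
  have hp1 : ‖p.1‖ ≤ ‖p‖ := norm_fst_le p
  have hp2 : ‖p.2‖ ≤ ‖p‖ := norm_snd_le p
  calc _ ≤ ((1 + ‖p.1‖) * (1 + ‖y - p.1‖)) ^ k * ‖iteratedFDeriv ℝ l (Mod p.2 h) (y - p.1)‖ := by
        gcongr
        exact one_add_norm_le_mul' _ _
    _ = (1 + ‖p.1‖) ^ k * ((1 + ‖y - p.1‖) ^ k * ‖iteratedFDeriv ℝ l (Mod p.2 h) (y - p.1)‖) := by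
        rw [mul_pow]; ring
    _ ≤ (1 + ‖p.1‖) ^ k * (2 ^ l * 2 ^ k * (1 + ‖p.2‖) ^ l * Q) := by gcongr
    _ ≤ (1 + ‖p‖) ^ k * (2 ^ l * 2 ^ k * (1 + ‖p‖) ^ l * Q) := by gcongr
    _ = _ := by ring

theorem integrable_one_add_pow_mul (f : SchwartzMap V ℂ) (N : ℕ) :
    Integrable (fun y => (1 + ‖y‖) ^ N * ‖f y‖) := by
  have h1 : Integrable (fun y => 2 ^ (N-1) * (‖f y‖ + ‖y‖ ^ N * ‖f y‖)) :=
    (f.integrable.norm.add (f.integrable_pow_mul volume N)).const_mul _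
  refine h1.mono' (by fun_prop) (Eventually.of_forall fun y => ?_)
  rw [Real.norm_of_nonneg (by positivity)]
  calc (1 + ‖y‖) ^ N * ‖f y‖ ≤ (2 ^ (N-1) * (1 ^ N + ‖y‖ ^ N)) * ‖f y‖ := by
        gcongr
        exact add_pow_le zero_le_one (norm_nonneg _) N
    _ = _ := by rw [one_pow]; ring

theorem conv_decay (f h : SchwartzMap V ℂ) (N : ℕ) :
    ∃ C, ∀ x, (1 + ‖x‖) ^ N * ∫ y, ‖f y‖ * ‖h (y - x)‖ ≤ C := by
  set Q := 2 ^ N * (Finset.Iic (N, 0)).sup (schwartzSeminormFamily ℂ V ℂ) h with hQ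
  refine ⟨∫ y, ((1 + ‖y‖) ^ N * ‖f y‖) * Q, fun x => ?_⟩
  rw [← integral_const_mul]
  refine integral_mono_of_nonneg (Eventually.of_forall fun y => by positivity)
    ((integrable_one_add_pow_mul f N).mul_const _) (Eventually.of_forall fun y => ?_)
  have h1 : (1 + ‖y - x‖) ^ N * ‖h (y - x)‖ ≤ Q := by
    have := one_add_le_sup_seminorm_apply (𝕜 := ℂ) (m := (N, 0)) (k := N) (n := 0) le_rfl le_rfl h (y - x)
    rwa [norm_iteratedFDeriv_zero] at this
  calc (1 + ‖x‖) ^ N * (‖f y‖ * ‖h (y - x)‖)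
      ≤ ((1 + ‖y‖) * (1 + ‖y - x‖)) ^ N * (‖f y‖ * ‖h (y - x)‖) := by
        gcongr
        exact one_add_norm_le_mul _ _
    _ = ((1 + ‖y‖) ^ N * ‖f y‖) * ((1 + ‖y - x‖) ^ N * ‖h (y - x)‖) := by
        rw [mul_pow]; ring
    _ ≤ _ := mul_le_mul_of_nonneg_left h1 (by positivity)

theorem norm_integral_TrMod_le (f h : SchwartzMap V ℂ) (x ξ : V) :
    ‖∫ y, f y * Tr x (Mod ξ h) y‖ ≤ ∫ y, ‖f y‖ * ‖h (y - x)‖ := by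
  refine (norm_integral_le_integral_norm _).trans (le_of_eq ?_)
  congr 1 with y
  rw [norm_mul, Tr_apply, Mod_apply, norm_mul, norm_chr, one_mul]

theorem norm_integral_TrMod_le' (f h : SchwartzMap V ℂ) (x ξ : V) :
    ‖∫ y, f y * Tr x (Mod ξ h) y‖ ≤
      ∫ y, ‖(𝓕⁻ f) y‖ * ‖(𝓕 h) (y - (2 * Real.pi)⁻¹ • ξ)‖ := by
  have h1 : ∫ y, f y * Tr x (Mod ξ h) y = ∫ y, (𝓕⁻ f) y * (𝓕 (Tr x (Mod ξ h))) y := by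
    rw [← SchwartzMap.integral_fourier_mul_eq, FourierTransform.fourier_fourierInv_eq]
  rw [h1, fourier_Tr, fourier_Mod]
  refine (norm_integral_le_integral_norm _).trans (le_of_eq ?_)
  congr 1 with y
  rw [norm_mul, Mod_apply, norm_mul, norm_chr, one_mul, Tr_apply]

theorem integral_TrMod_decay (f h : SchwartzMap V ℂ) (N : ℕ) :
    ∃ C, 0 ≤ C ∧ ∀ p : V × V, (1 + ‖p‖) ^ N * ‖∫ y, f y * Tr p.1 (Mod p.2 h) y‖ ≤ C := by
  obtain ⟨C1, h1⟩ := conv_decay f h N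
  obtain ⟨C2, h2⟩ := conv_decay (𝓕⁻ f) (𝓕 h) N
  have hpi : 1 ≤ 2 * Real.pi := by linarith [Real.pi_gt_three]
  have key : ∀ p : V × V, (1 + ‖p‖) ^ N * ‖∫ y, f y * Tr p.1 (Mod p.2 h) y‖ ≤
      max C1 ((2 * Real.pi) ^ N * C2) := by
    intro p
    rcases le_total ‖p.2‖ ‖p.1‖ with hle | hle
    · have hp : ‖p‖ = ‖p.1‖ := by rw [Prod.norm_def, max_eq_left hle]
      rw [hp]
      refine le_max_of_le_left (le_trans ?_ (h1 p.1))
      gcongr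
      exact norm_integral_TrMod_le f h p.1 p.2
    · have hp : ‖p‖ = ‖p.2‖ := by rw [Prod.norm_def, max_eq_right hle]
      rw [hp]
      refine le_max_of_le_right ?_
      have h3 : 1 + ‖p.2‖ ≤ (2 * Real.pi) * (1 + ‖(2 * Real.pi)⁻¹ • p.2‖) := by
        rw [norm_smul, Real.norm_of_nonneg (by positivity), mul_add, mul_inv_cancel_left₀ (by positivity)]
        linarith
      calc _ ≤ ((2 * Real.pi) * (1 + ‖(2 * Real.pi)⁻¹ • p.2‖)) ^ N *
            ∫ y, ‖(𝓕⁻ f) y‖ * ‖(𝓕 h) (y - (2 * Real.pi)⁻¹ • p.2)‖ := by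
            gcongr
            exact norm_integral_TrMod_le' f h p.1 p.2
        _ = (2 * Real.pi) ^ N * ((1 + ‖(2 * Real.pi)⁻¹ • p.2‖) ^ N *
            ∫ y, ‖(𝓕⁻ f) y‖ * ‖(𝓕 h) (y - (2 * Real.pi)⁻¹ • p.2)‖) := by
            rw [mul_pow, mul_assoc]
        _ ≤ _ := by gcongr; exact h2 _
  refine ⟨_, le_trans ?_ (key 0), key⟩
  positivity

/-- Integration against a Schwartz function. -/
noncomputable def pair (f : SchwartzMap V ℂ) : SchwartzMap V ℂ →L[ℂ] ℂ :=
  (SchwartzMap.integralCLM ℂ volume).comp (SchwartzMap.smulLeftCLM ℂ (f : V → ℂ))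

theorem pair_apply (f h : SchwartzMap V ℂ) : pair f h = ∫ y, f y * h y := by
  rw [pair, ContinuousLinearMap.comp_apply, SchwartzMap.integralCLM_apply]
  congr 1 with y
  rw [SchwartzMap.smulLeftCLM_apply_apply f.hasTemperateGrowth, smul_eq_mul]

theorem integrable_seminorm_smul {c : V × V → ℂ} {A : V × V → SchwartzMap V ℂ}
    (hc : Continuous c) (hA : Continuous A)
    (hcd : ∀ N : ℕ, ∃ C, 0 ≤ C ∧ ∀ p, (1 + ‖p‖) ^ N * ‖c p‖ ≤ C)
    (hAd : ∀ k l, ∃ C n, 0 ≤ C ∧ ∀ p, SchwartzMap.seminorm ℂ k l (A p) ≤ C * (1 + ‖p‖) ^ (n : ℕ))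
    (k l : ℕ) : Integrable (fun p => SchwartzMap.seminorm ℂ k l (c p • A p)) := by
  obtain ⟨C, n, hC, h1⟩ := hAd k l
  set m := Module.finrank ℝ (V × V) + 1 with hm
  obtain ⟨D, hD, h2⟩ := hcd (m + n)
  have : (volume : Measure (V × V)).IsAddHaarMeasure :=
    inferInstanceAs ((volume : Measure V).prod (volume : Measure V)).IsAddHaarMeasure
  have h3 : Integrable (fun p : V × V => (D * C) * (1 + ‖p‖) ^ (-(m : ℝ))) :=
    (integrable_one_add_norm (by rw [hm]; push_cast; linarith)).const_mul _
  refine h3.mono' ?_ (Eventually.of_forall fun p => ?_)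
  · exact (((schwartz_withSeminorms ℂ V ℂ).continuous_seminorm (k, l)).comp
      (hc.smul hA)).aestronglyMeasurable
  rw [Real.norm_of_nonneg (apply_nonneg _ _), map_smul_eq_mul, Real.rpow_neg (by positivity),
    Real.rpow_natCast, ← div_eq_mul_inv, le_div_iff₀ (by positivity)]
  calc _ ≤ ‖c p‖ * (C * (1 + ‖p‖) ^ n) * (1 + ‖p‖) ^ m := by gcongr; exact h1 p
    _ = ((1 + ‖p‖) ^ (m + n) * ‖c p‖) * C := by ring
    _ ≤ _ := by gcongr; exact h2 p

theorem chr_mul_cancel (ξ x y : V) : chr ξ (-x) * chr (-ξ) (y - x) = chr (-ξ) y := by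
  simp only [chr, ← Complex.exp_add, inner_neg_right, inner_neg_left, inner_sub_left]
  congr 1; push_cast; ring

theorem inner_inversion (ψ g gb : SchwartzMap V ℂ) (x y : V) :
    ∫ ξ, (∫ z, ψ z * Tr x (Mod ξ g) z) * Tr x (Mod (-ξ) gb) y =
      (|(((2 * Real.pi)⁻¹) ^ Module.finrank ℝ V)⁻¹| : ℝ) * (ψ y * (g (y - x) * gb (y - x))) := by
  set k : SchwartzMap V ℂ := SchwartzMap.smulLeftCLM ℂ (ψ : V → ℂ) (Tr x g) with hk
  have hkz : ∀ z, k z = ψ z * g (z - x) := fun z => by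
    rw [hk, SchwartzMap.smulLeftCLM_apply_apply ψ.hasTemperateGrowth, smul_eq_mul, Tr_apply]
  have hW : ∀ ξ, ∫ z, ψ z * Tr x (Mod ξ g) z = chr ξ (-x) * (𝓕⁻ k) ((2 * Real.pi)⁻¹ • ξ) := by
    intro ξ
    rw [fourierInv_coe, Real.fourierInv_eq', ← integral_const_mul]
    congr 1 with z
    rw [Tr_apply, Mod_apply, hkz, smul_eq_mul]
    have : chr ξ (z - x) = chr ξ (-x) *
        Complex.exp ((↑(2 * Real.pi * inner ℝ z ((2 * Real.pi)⁻¹ • ξ)) : ℂ) * Complex.I) := by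
      rw [chr, chr, ← Complex.exp_add, inner_smul_right, mul_inv_cancel_left₀ (by positivity)]
      congr 1
      rw [inner_sub_left, inner_neg_left]; push_cast; ring
    rw [this]; ring
  have hInt : ∀ ξ, (∫ z, ψ z * Tr x (Mod ξ g) z) * Tr x (Mod (-ξ) gb) y =
      (fun w => (Complex.exp ((↑(-2 * Real.pi * inner ℝ w y) : ℂ) * Complex.I) • (𝓕⁻ k) w) *
        gb (y - x)) ((2 * Real.pi)⁻¹ • ξ) := by
    intro ξ
    rw [hW, Tr_apply, Mod_apply]
    have h1 : chr (-ξ) y =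
        Complex.exp ((↑(-2 * Real.pi * inner ℝ ((2 * Real.pi)⁻¹ • ξ) y) : ℂ) * Complex.I) := by
      rw [chr, real_inner_smul_left, inner_neg_right, real_inner_comm]
      congr 1
      have : (Real.pi : ℂ) ≠ 0 := by exact_mod_cast Real.pi_ne_zero
      push_cast; field_simp
    simp only [smul_eq_mul]
    rw [← h1, ← chr_mul_cancel ξ x y]; ring
  refine (integral_congr_ae (Eventually.of_forall hInt)).trans ?_
  refine (Measure.integral_comp_smul volume
    (fun w => (Complex.exp ((↑(-2 * Real.pi * inner ℝ w y) : ℂ) * Complex.I) • (𝓕⁻ k) w) *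
        gb (y - x)) ((2 * Real.pi)⁻¹)).trans ?_
  rw [integral_mul_const, ← Real.fourier_eq', ← fourier_coe,
    FourierTransform.fourier_fourierInv_eq, hkz]
  rw [Complex.real_smul]; ring

theorem window_ne_zero {g gb : SchwartzMap V ℂ} (hg : g ≠ 0)
    (hgb : ∀ y, gb y = starRingEnd ℂ (g y)) : ∫ y, g y * gb y ≠ 0 := by
  intro h0
  have h1 : ∀ y, g y * gb y = ((‖g y‖ ^ 2 : ℝ) : ℂ) := fun y => by
    rw [hgb, Complex.mul_conj, Complex.normSq_eq_norm_sq]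
  have hInt : Integrable (fun y => ‖g y‖ ^ 2) := by
    have h2 : Integrable (fun y => (SchwartzMap.smulLeftCLM ℂ (g : V → ℂ) gb) y) :=
      SchwartzMap.integrable _
    have := h2.norm
    refine this.congr (Eventually.of_forall fun y => ?_)
    simp only
    rw [SchwartzMap.smulLeftCLM_apply_apply g.hasTemperateGrowth, smul_eq_mul, h1,
      Complex.norm_real, Real.norm_of_nonneg (by positivity)]
  simp_rw [h1] at h0
  rw [integral_complex_ofReal, Complex.ofReal_eq_zero,
    integral_eq_zero_iff_of_nonneg (fun y => by positivity) hInt] at h0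
  have h3 := (Continuous.ae_eq_iff_eq volume (by fun_prop) continuous_const).1 h0
  apply hg
  ext y
  have : ‖g y‖ ^ 2 = 0 := congrFun h3 y
  simpa using this

theorem schwartz_of_decay {g gb : SchwartzMap V ℂ} (hg : g ≠ 0)
    (hgb : ∀ y, gb y = starRingEnd ℂ (g y)) (u : SchwartzMap V ℂ →L[ℂ] ℂ)
    (hu : ∀ N : ℕ, ∃ C, 0 ≤ C ∧ ∀ p : V × V, (1 + ‖p‖) ^ N * ‖u (Tr p.1 (Mod (-p.2) gb))‖ ≤ C) :
    ∃ f : SchwartzMap V ℂ, ∀ ψ : SchwartzMap V ℂ, u ψ = ∫ y, f y * ψ y := by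
  have hcneg : Continuous fun p : V × V => (p.1, -p.2) := by fun_prop
  have hc1 : Continuous fun p : V × V => Tr p.1 (Mod (-p.2) gb) :=
    (continuous_TrMod gb).comp hcneg
  have hc2 := continuous_TrMod g
  have hb1 : ∀ k l, ∃ C n, 0 ≤ C ∧ ∀ p : V × V,
      SchwartzMap.seminorm ℂ k l (Tr p.1 (Mod (-p.2) gb)) ≤ C * (1 + ‖p‖) ^ (n : ℕ) := by
    intro k l
    obtain ⟨C, n, hC, h⟩ := seminorm_TrMod_le gb k l
    refine ⟨C, n, hC, fun p => ?_⟩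
    have := h (p.1, -p.2)
    simpa [Prod.norm_def] using this
  have hb2 := seminorm_TrMod_le g
  set G := ∫ y, g y * gb y with hG
  have hG0 : G ≠ 0 := window_ne_zero hg hgb
  set K : ℝ := |(((2 * Real.pi)⁻¹) ^ Module.finrank ℝ V)⁻¹| with hK
  have hK0 : (K : ℂ) ≠ 0 := by
    rw [hK]; exact_mod_cast (abs_pos.2 (by positivity)).ne'
  obtain ⟨f, -, hf⟩ := exists_pettis (μ := volume)
    (Φ := fun p : V × V => u (Tr p.1 (Mod (-p.2) gb)) • Tr p.1 (Mod p.2 g))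
    ((u.continuous.comp hc1).smul hc2)
    (integrable_seminorm_smul (u.continuous.comp hc1) hc2 hu hb2)
  refine ⟨((K : ℂ) * G)⁻¹ • f, fun ψ => ?_⟩
  have hW : ∀ p : V × V, pair ψ (Tr p.1 (Mod p.2 g)) = ∫ z, ψ z * Tr p.1 (Mod p.2 g) z :=
    fun p => pair_apply _ _
  have hWc : Continuous fun p : V × V => pair ψ (Tr p.1 (Mod p.2 g)) :=
    (pair ψ).continuous.comp hc2
  have hWd : ∀ N : ℕ, ∃ C, 0 ≤ C ∧ ∀ p : V × V,
      (1 + ‖p‖) ^ N * ‖pair ψ (Tr p.1 (Mod p.2 g))‖ ≤ C := by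
    simp_rw [hW]; exact integral_TrMod_decay ψ g
  have hΦc : Continuous fun p : V × V =>
      pair ψ (Tr p.1 (Mod p.2 g)) • Tr p.1 (Mod (-p.2) gb) := hWc.smul hc1
  have hΦi := integrable_seminorm_smul hWc hc1 hWd hb1
  obtain ⟨Ψ, hΨ, hΨu⟩ := exists_pettis (μ := volume) hΦc hΦi
  have hΨψ : Ψ = ((K : ℂ) * G) • ψ := by
    ext y
    have hInt : Integrable (fun p : V × V =>
        (pair ψ (Tr p.1 (Mod p.2 g)) • Tr p.1 (Mod (-p.2) gb)) y) (volume.prod volume) := by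
      refine (hΦi 0 0).mono' ?_ (Eventually.of_forall fun p => SchwartzMap.norm_le_seminorm ℂ _ y)
      have := continuous_iteratedFDeriv_param (Z := V × V) hΦc 0 y
      refine Continuous.aestronglyMeasurable ?_
      have h2 : Continuous fun p : V × V => (toBoundedContinuousFunctionCLM ℂ V ℂ)
          (pair ψ (Tr p.1 (Mod p.2 g)) • Tr p.1 (Mod (-p.2) gb)) y :=
        (BoundedContinuousFunction.evalCLM ℂ y).continuous.comp
          ((toBoundedContinuousFunctionCLM ℂ V ℂ).continuous.comp hΦc)
      exact h2
    rw [hΨ, Measure.volume_eq_prod, integral_prod _ hInt]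
    have hin : ∀ x, ∫ ξ, (pair ψ (Tr x (Mod ξ g)) • Tr x (Mod (-ξ) gb)) y =
        (K : ℂ) * (ψ y * (g (y - x) * gb (y - x))) := by
      intro x
      simp only [smul_apply, pair_apply, smul_eq_mul]
      exact inner_inversion ψ g gb x y
    rw [integral_congr_ae (Eventually.of_forall hin)]
    rw [integral_const_mul, integral_const_mul,
      integral_sub_left_eq_self (fun w => g w * gb w) volume y, ← hG, smul_apply, smul_eq_mul]
    ring
  have h1 : ((K : ℂ) * G) * u ψ = pair ψ f := by
    rw [← smul_eq_mul, ← map_smul, ← hΨψ, hΨu, hf]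
    refine integral_congr_ae (Eventually.of_forall fun p => ?_)
    simp only [map_smul, smul_eq_mul]
    ring
  rw [pair_apply] at h1
  have h2 : ∫ y, (((K : ℂ) * G)⁻¹ • f) y * ψ y = ((K : ℂ) * G)⁻¹ * ∫ y, ψ y * f y := by
    rw [← integral_const_mul (((K : ℂ) * G)⁻¹)]
    refine integral_congr_ae (Eventually.of_forall fun y => ?_)
    simp only [smul_apply, smul_eq_mul]; ring
  rw [h2, ← h1, inv_mul_cancel_left₀ (mul_ne_zero hK0 hG0)]

end Trans
end FBI

namespace FBI
open MeasureTheory SchwartzMap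

theorem bracket_le (a b : ℝ) (ha : 0 ≤ a) (hb : 0 ≤ b) :
    Real.sqrt (1 + a ^ 2 + b ^ 2) ≤ 2 * (1 + max a b) := by
  rw [Real.sqrt_le_left (by positivity)]
  have h1 := le_max_left a b
  have h2 := le_max_right a b
  nlinarith

theorem le_bracket (a b : ℝ) (ha : 0 ≤ a) (hb : 0 ≤ b) :
    1 + max a b ≤ 2 * Real.sqrt (1 + a ^ 2 + b ^ 2) := by
  have h1 : 1 ≤ Real.sqrt (1 + a ^ 2 + b ^ 2) := by
    rw [Real.one_le_sqrt]; nlinarith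
  have h2 : max a b ≤ Real.sqrt (1 + a ^ 2 + b ^ 2) :=
    max_le (Real.le_sqrt_of_sq_le (by nlinarith)) (Real.le_sqrt_of_sq_le (by nlinarith))
  linarith

end FBI

open RealInnerProductSpace in
/-- Let `g ∈ 𝒮(ℝ^d)` be nonzero and `u ∈ 𝒮'(ℝ^d)`, with
`𝒯_g u(x,ξ) = (2π)^{-d/2} (u, T_x M_ξ g)` realized via the conjugated window
`φ x ξ : y ↦ conj((T_x M_ξ g)(y))`. Then `u ∈ 𝒮(ℝ^d)` (i.e. `u` is given by
integration against a Schwartz function) if and only if for every `N ≥ 0` there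
is `C_N > 0` with `|𝒯_g u(x,ξ)| ≤ C_N ⟨(x,ξ)⟩^{-N}` for all `(x,ξ)`. -/
theorem schwartz_iff_fbi_rapid_decay (d : ℕ)
    (g : SchwartzMap (EuclideanSpace ℝ (Fin d)) ℂ) (hg : g ≠ 0)
    (u : SchwartzMap (EuclideanSpace ℝ (Fin d)) ℂ →L[ℂ] ℂ)
    (φ : EuclideanSpace ℝ (Fin d) → EuclideanSpace ℝ (Fin d) →
      SchwartzMap (EuclideanSpace ℝ (Fin d)) ℂ)
    (hφ : ∀ x ξ y, φ x ξ y =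
      starRingEnd ℂ (Complex.exp (Complex.I * (⟪y - x, ξ⟫ : ℝ)) * g (y - x)))
    (T : EuclideanSpace ℝ (Fin d) → EuclideanSpace ℝ (Fin d) → ℂ)
    (hT : ∀ x ξ, T x ξ = (((2 * Real.pi) ^ (-(d : ℝ) / 2) : ℝ) : ℂ) * u (φ x ξ)) :
    (∃ f : SchwartzMap (EuclideanSpace ℝ (Fin d)) ℂ,
        ∀ ψ : SchwartzMap (EuclideanSpace ℝ (Fin d)) ℂ, u ψ = ∫ y, f y * ψ y) ↔
      (∀ N : ℕ, ∃ C : ℝ, 0 < C ∧ ∀ x ξ,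
        ‖T x ξ‖ ≤ C * Real.sqrt (1 + ‖x‖ ^ 2 + ‖ξ‖ ^ 2) ^ (-(N : ℝ))) := by
  have hgb : ∀ y, φ 0 0 y = starRingEnd ℂ (g y) := by
    intro y; rw [hφ]; simp
  have hφ' : ∀ x ξ, φ x ξ = FBI.Tr x (FBI.Mod (-ξ) (φ 0 0)) := by
    intro x ξ
    ext y
    rw [FBI.Tr_apply, FBI.Mod_apply, hgb, hφ, map_mul, ← Complex.exp_conj, FBI.chr]
    simp [inner_neg_right]
  set c : ℝ := (2 * Real.pi) ^ (-(d : ℝ) / 2) with hc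
  have hc0 : 0 < c := by positivity
  have hTn : ∀ x ξ, ‖T x ξ‖ = c * ‖u (φ x ξ)‖ := by
    intro x ξ
    rw [hT, norm_mul, Complex.norm_real, Real.norm_of_nonneg hc0.le]
  have hs : ∀ x ξ : EuclideanSpace ℝ (Fin d), 0 < Real.sqrt (1 + ‖x‖ ^ 2 + ‖ξ‖ ^ 2) :=
    fun x ξ => Real.sqrt_pos.2 (by positivity)
  constructor
  · rintro ⟨f, hf⟩ N
    obtain ⟨C, hC, h⟩ := FBI.integral_TrMod_decay f (φ 0 0) N
    refine ⟨c * (2 ^ N * C) + 1, by positivity, fun x ξ => ?_⟩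
    have h1 := h (x, -ξ)
    simp only [Prod.norm_def, norm_neg] at h1
    rw [← hφ', ← hf] at h1
    have h2 := FBI.bracket_le ‖x‖ ‖ξ‖ (norm_nonneg _) (norm_nonneg _)
    rw [Real.rpow_neg (hs x ξ).le, Real.rpow_natCast, ← div_eq_mul_inv,
      le_div_iff₀ (pow_pos (hs x ξ) N), hTn]
    calc c * ‖u (φ x ξ)‖ * Real.sqrt (1 + ‖x‖ ^ 2 + ‖ξ‖ ^ 2) ^ N
        ≤ c * ‖u (φ x ξ)‖ * (2 * (1 + max ‖x‖ ‖ξ‖)) ^ N := by gcongr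
      _ = c * (2 ^ N * ((1 + max ‖x‖ ‖ξ‖) ^ N * ‖u (φ x ξ)‖)) := by rw [mul_pow]; ring
      _ ≤ c * (2 ^ N * C) := by gcongr
      _ ≤ _ := by linarith
  · intro h
    refine FBI.schwartz_of_decay hg hgb u fun N => ?_
    obtain ⟨C, hC, h1⟩ := h N
    refine ⟨c⁻¹ * (2 ^ N * C), by positivity, fun p => ?_⟩
    have h2 := h1 p.1 p.2
    have h3 := FBI.le_bracket ‖p.1‖ ‖p.2‖ (norm_nonneg _) (norm_nonneg _)
    rw [Real.rpow_neg (hs p.1 p.2).le, Real.rpow_natCast, ← div_eq_mul_inv,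
      le_div_iff₀ (pow_pos (hs p.1 p.2) N), hTn] at h2
    rw [← hφ', Prod.norm_def, le_inv_mul_iff₀ hc0]
    calc c * ((1 + max ‖p.1‖ ‖p.2‖) ^ N * ‖u (φ p.1 p.2)‖)
        ≤ c * ((2 * Real.sqrt (1 + ‖p.1‖ ^ 2 + ‖p.2‖ ^ 2)) ^ N * ‖u (φ p.1 p.2)‖) := by gcongr
      _ = 2 ^ N * (c * ‖u (φ p.1 p.2)‖ * Real.sqrt (1 + ‖p.1‖ ^ 2 + ‖p.2‖ ^ 2) ^ N) := by
        rw [mul_pow]; ring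
      _ ≤ _ := by gcongr
end

section
/- If g, h ∈ 𝒮(ℝ^d) and u ∈ 𝒮'(ℝ^d) then 𝒯_h^* 𝒯_g u = (h, g)_{L²} u. In particular, if g is nonzero then ‖g‖_{L²}^{−2} 𝒯_g^* 𝒯_g u = u (the inversion formula). -/
section FBIAux

open MeasureTheory SchwartzMap Filter Topology
open scoped BoundedContinuousFunction
set_option maxSynthPendingDepth 3

noncomputable def fbiT (E : Type*) [NormedAddCommGroup E] [NormedSpace ℝ E] (k n : ℕ) :
    SchwartzMap E ℂ →ₗ[ℂ] (E →ᵇ (E [×n]→L[ℝ] ℂ)) where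
  toFun ψ := BoundedContinuousFunction.ofNormedAddCommGroup
    (fun y => (((‖y‖ ^ k : ℝ) : ℂ)) • iteratedFDeriv ℝ n ψ y)
    (by
      have h1 : Continuous (iteratedFDeriv ℝ n ψ) :=
        (ψ.smooth ⊤).continuous_iteratedFDeriv (by exact_mod_cast le_top)
      have h2 : Continuous fun y : E => (((‖y‖ ^ k : ℝ) : ℂ)) := by fun_prop
      exact h2.smul h1)
    (SchwartzMap.seminorm ℂ k n ψ)
    (by
      intro y
      rw [norm_smul, Complex.norm_real, norm_pow, norm_norm]
      exact SchwartzMap.le_seminorm ℂ k n ψ y)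
  map_add' f g := by
    ext1 y
    have := iteratedFDeriv_add_apply (𝕜 := ℝ) (i := n) (x := y) (f.contDiffAt n) (g.contDiffAt n)
    simp only [BoundedContinuousFunction.coe_ofNormedAddCommGroup,
      BoundedContinuousFunction.coe_add, Pi.add_apply, ← smul_add]
    rw [← this]
    rfl
  map_smul' c f := by
    ext1 y
    have := iteratedFDeriv_const_smul_apply (𝕜 := ℝ) (i := n) (x := y) (a := c) (f.contDiffAt n)
    simp only [BoundedContinuousFunction.coe_ofNormedAddCommGroup,
      BoundedContinuousFunction.coe_smul, RingHom.id_apply]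
    rw [smul_comm c, ← this]
    rfl

theorem fbiT_apply {E : Type*} [NormedAddCommGroup E] [NormedSpace ℝ E] (k n : ℕ)
    (ψ : SchwartzMap E ℂ) (y : E) :
    fbiT E k n ψ y = (((‖y‖ ^ k : ℝ) : ℂ)) • iteratedFDeriv ℝ n ψ y := rfl

theorem seminorm_le_fbiT {E : Type*} [NormedAddCommGroup E] [NormedSpace ℝ E] (k n : ℕ)
    (ψ : SchwartzMap E ℂ) : SchwartzMap.seminorm ℂ k n ψ ≤ ‖fbiT E k n ψ‖ := by
  refine SchwartzMap.seminorm_le_bound ℂ k n ψ (norm_nonneg (fbiT E k n ψ)) fun y => ?_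
  have := (fbiT E k n ψ).norm_coe_le_norm y
  rwa [fbiT_apply, norm_smul, Complex.norm_real, norm_pow, norm_norm] at this

/-- Factorization of a tempered distribution through a Banach space. -/
theorem fbi_factor {E : Type*} [NormedAddCommGroup E] [NormedSpace ℝ E]
    (u : SchwartzMap E ℂ →L[ℂ] ℂ) :
    ∃ (s : Finset (ℕ × ℕ)) (v : (∀ i : s, E →ᵇ (E [×i.1.2]→L[ℝ] ℂ)) →L[ℂ] ℂ),
      ∀ ψ, u ψ = v (fun i => fbiT E i.1.1 i.1.2 ψ) := by
  obtain ⟨s, C, hC, hb⟩ := Seminorm.bound_of_continuous (schwartz_withSeminorms ℂ E ℂ)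
    ((normSeminorm ℂ ℂ).comp u.toLinearMap) (by
      have : Continuous fun ψ => ‖u ψ‖ := by fun_prop
      exact this)
  let T : SchwartzMap E ℂ →ₗ[ℂ] (∀ i : s, E →ᵇ (E [×i.1.2]→L[ℝ] ℂ)) :=
    LinearMap.pi fun i => fbiT E i.1.1 i.1.2
  have hT : ∀ ψ, ‖u ψ‖ ≤ C * ‖T ψ‖ := by
    intro ψ
    have h1 := hb ψ
    have h2 : (s.sup (schwartzSeminormFamily ℂ E ℂ)) ψ ≤ ‖T ψ‖ := by
      refine Seminorm.finset_sup_apply_le (norm_nonneg _) fun i hi => ?_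
      refine (seminorm_le_fbiT i.1 i.2 ψ).trans ?_
      exact norm_le_pi_norm (T ψ) ⟨i, hi⟩
    calc ‖u ψ‖ ≤ C * (s.sup (schwartzSeminormFamily ℂ E ℂ)) ψ := h1
      _ ≤ _ := by gcongr
  have hT0 : ∀ ψ χ, T ψ = T χ → u ψ = u χ := by
    intro ψ χ h
    rw [← sub_eq_zero, ← map_sub, ← norm_le_zero_iff]
    refine (hT _).trans ?_
    rw [map_sub, h, sub_self, norm_zero, mul_zero]
  choose r hr' using fun b : LinearMap.range T => b.2
  let f0 : LinearMap.range T →ₗ[ℂ] ℂ :=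
    { toFun := fun b => u (r b)
      map_add' := fun b c => by
        rw [← map_add]
        apply hT0
        rw [map_add, hr', hr', hr']; rfl
      map_smul' := fun a c => by
        rw [← map_smul]
        apply hT0
        rw [map_smul, hr', hr']; rfl }
  let f : StrongDual ℂ (LinearMap.range T) :=
    LinearMap.mkContinuous f0 C (fun b => by
      refine (hT (r b)).trans ?_
      rw [hr']; rfl)
  obtain ⟨v, hv, -⟩ := exists_extension_norm_eq _ f
  refine ⟨s, v, fun ψ => ?_⟩
  have h3 := hv (T.rangeRestrict ψ)
  have h4 : v (fun i => fbiT E i.1.1 i.1.2 ψ) = u (r (T.rangeRestrict ψ)) := h3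
  rw [h4]
  apply hT0
  rw [hr']
  rfl

theorem fbiT_continuous {E Z : Type*} [NormedAddCommGroup E] [NormedSpace ℝ E] [ProperSpace E]
    [UniformSpace Z] [LocallyCompactSpace Z]
    (Φ : Z → SchwartzMap E ℂ)
    (hcont : ∀ n, Continuous fun p : Z × E => iteratedFDeriv ℝ n (Φ p.1) p.2)
    (b : ℕ → ℕ → Z → ℝ) (hbc : ∀ k n, Continuous (b k n))
    (hb : ∀ k n z y, ‖y‖ ^ k * ‖iteratedFDeriv ℝ n (Φ z) y‖ ≤ b k n z) (k n : ℕ) :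
    Continuous fun z => fbiT E k n (Φ z) := by
  rw [continuous_iff_continuousAt]
  intro z₀
  rw [ContinuousAt, Metric.tendsto_nhds]
  intro ε hε
  have hnear : ∀ᶠ z in 𝓝 z₀, b (k + 1) n z < b (k + 1) n z₀ + 1 :=
    ((hbc (k + 1) n).tendsto z₀).eventually (gt_mem_nhds (by linarith))
  set M := b (k + 1) n z₀ + 1 with hM
  have hM0 : 0 < M := by
    have := (by positivity : (0:ℝ) ≤ _).trans (hb (k + 1) n z₀ 0)
    linarith
  set R := 4 * M / ε with hR
  have hR0 : 0 < R := by positivity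
  have : CompactSpace (Metric.closedBall (0 : E) R) :=
    isCompact_iff_compactSpace.1 (isCompact_closedBall 0 R)
  have hun := Continuous.tendstoUniformly
    (fun (z : Z) (y : Metric.closedBall (0 : E) R) => fbiT E k n (Φ z) (y : E)) (by
      have h1 : Continuous fun p : Z × (Metric.closedBall (0 : E) R) =>
        iteratedFDeriv ℝ n (Φ p.1) (p.2 : E) :=
        (hcont n).comp (continuous_fst.prodMk (continuous_subtype_val.comp continuous_snd))
      have h2 : Continuous fun p : Z × (Metric.closedBall (0 : E) R) =>
        (((‖(p.2 : E)‖ ^ k : ℝ) : ℂ)) := by fun_prop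
      exact h2.smul h1) z₀
  rw [Metric.tendstoUniformly_iff] at hun
  have hsmall : ∀ z, b (k + 1) n z ≤ M → ∀ y : E, R < ‖y‖ → ‖fbiT E k n (Φ z) y‖ ≤ ε / 4 := by
    intro z hz y hy
    have h1 := (hb (k + 1) n z y).trans hz
    rw [fbiT_apply, norm_smul, Complex.norm_real, norm_pow, norm_norm]
    have h2 : R * (‖y‖ ^ k * ‖iteratedFDeriv ℝ n (Φ z) y‖) ≤ M := by
      refine le_trans ?_ h1
      rw [pow_succ', mul_assoc]
      gcongr
    have h3 : M = R * (ε / 4) := by rw [hR]; field_simp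
    rw [h3] at h2
    exact le_of_mul_le_mul_left h2 hR0
  filter_upwards [hnear, hun (ε / 2) (by positivity)] with z hz1 hz2
  refine lt_of_le_of_lt ((BoundedContinuousFunction.dist_le (by positivity : 0 ≤ ε / 2)).2 ?_)
    (by linarith)
  intro y
  by_cases hy : ‖y‖ ≤ R
  · have := hz2 ⟨y, by simpa using hy⟩
    rw [dist_comm]
    exact this.le
  · push Not at hy
    refine (dist_le_norm_add_norm _ _).trans ?_
    have h1 := hsmall z hz1.le y hy
    have h2 := hsmall z₀ (by linarith) y hy
    linarith

theorem fbi_swap {E Z : Type*} [NormedAddCommGroup E] [NormedSpace ℝ E] [ProperSpace E]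
    [UniformSpace Z] [LocallyCompactSpace Z] [SecondCountableTopology Z]
    [MeasurableSpace Z] [OpensMeasurableSpace Z] (μ : Measure Z)
    (Φ : Z → SchwartzMap E ℂ)
    (hcont : ∀ n, Continuous fun p : Z × E => iteratedFDeriv ℝ n (Φ p.1) p.2)
    (b : ℕ → ℕ → Z → ℝ) (hbc : ∀ k n, Continuous (b k n))
    (hb : ∀ k n z y, ‖y‖ ^ k * ‖iteratedFDeriv ℝ n (Φ z) y‖ ≤ b k n z)
    (W : Z → ℂ) (hW : AEStronglyMeasurable W μ)
    (hbi : ∀ k n, Integrable (fun z => ‖W z‖ * b k n z) μ)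
    (F : SchwartzMap E ℂ) (hpt : ∀ y, ∫ z, W z * Φ z y ∂μ = F y)
    (u : SchwartzMap E ℂ →L[ℂ] ℂ) :
    ∫ z, W z * u (Φ z) ∂μ = u F := by
  have hint : ∀ n y, Integrable (fun z => W z • iteratedFDeriv ℝ n (Φ z) y) μ := by
    intro n y
    refine (hbi 0 n).mono' ?_ ?_
    · refine hW.smul ?_
      exact ((hcont n).comp (continuous_id.prodMk continuous_const)).aestronglyMeasurable
    · refine Eventually.of_forall fun z => ?_
      rw [norm_smul]
      have := hb 0 n z y
      rw [pow_zero, one_mul] at this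
      gcongr
  have hder : ∀ n y, ∫ z, W z • iteratedFDeriv ℝ n (Φ z) y ∂μ = iteratedFDeriv ℝ n F y := by
    intro n
    induction n with
    | zero =>
      intro y
      have h1 := ContinuousLinearMap.integral_comp_comm
        (ContinuousMultilinearMap.apply ℝ (fun _ : Fin 0 => E) ℂ 0) (hint 0 y)
      ext m
      obtain rfl : m = 0 := Subsingleton.elim _ _
      simpa [hpt] using h1.symm
    | succ n ih =>
      intro y
      have hfun : iteratedFDeriv ℝ n F =
          fun y => ∫ z, W z • iteratedFDeriv ℝ n (Φ z) y ∂μ := by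
        ext1 y; rw [ih]
      let I := continuousMultilinearCurryLeftEquiv ℝ (fun _ : Fin (n + 1) => E) ℂ
      have hI : ∀ z y, fderiv ℝ (iteratedFDeriv ℝ n (Φ z)) y
          = I (iteratedFDeriv ℝ (n + 1) (Φ z) y) := by
        intro z y
        rw [iteratedFDeriv_succ_eq_comp_left]
        simp [I]
      have hIi : Integrable (fun z => W z • fderiv ℝ (iteratedFDeriv ℝ n (Φ z)) y) μ := by
        have := I.toContinuousLinearEquiv.toContinuousLinearMap.integrable_comp (hint (n + 1) y)
        refine this.congr (Eventually.of_forall fun z => ?_)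
        simp only [hI]
        rfl
      have hd := hasFDerivAt_integral_of_dominated_of_fderiv_le (𝕜 := ℝ) (μ := μ) (x₀ := y)
        (F := fun y z => W z • iteratedFDeriv ℝ n (Φ z) y)
        (F' := fun y z => W z • fderiv ℝ (iteratedFDeriv ℝ n (Φ z)) y)
        (bound := fun z => ‖W z‖ * b 0 (n + 1) z) (s := Set.univ) univ_mem
        (Eventually.of_forall fun y => (hint n y).1) (hint n y) hIi.1
        (Eventually.of_forall fun z y _ => by
          rw [norm_smul, hI, I.norm_map]
          have := hb 0 (n + 1) z y
          rw [pow_zero, one_mul] at this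
          gcongr)
        (hbi 0 (n + 1))
        (Eventually.of_forall fun z y _ => by
          refine HasFDerivAt.fun_const_smul (DifferentiableAt.hasFDerivAt ?_) _
          exact ((Φ z).smooth ⊤).differentiable_iteratedFDeriv
            (by exact_mod_cast ENat.natCast_lt_top n) y)
      rw [iteratedFDeriv_succ_eq_comp_left, Function.comp_apply, hfun, hd.fderiv,
        LinearIsometryEquiv.eq_symm_apply]
      have h2 := ContinuousLinearMap.integral_comp_comm I.toContinuousLinearEquiv.toContinuousLinearMap (hint (n + 1) y)
      refine h2.symm.trans ?_
      congr 1
  obtain ⟨s, v, hv⟩ := fbi_factor u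
  have hTc : ∀ i : s, Continuous fun z => fbiT E i.1.1 i.1.2 (Φ z) :=
    fun i => fbiT_continuous Φ hcont b hbc hb _ _
  have hTi : ∀ i : s, Integrable (fun z => W z • fbiT E i.1.1 i.1.2 (Φ z)) μ := by
    intro i
    refine (hbi i.1.1 i.1.2).mono' (hW.smul (hTc i).aestronglyMeasurable) ?_
    refine Eventually.of_forall fun z => ?_
    rw [norm_smul]
    gcongr
    refine (BoundedContinuousFunction.norm_le ((by positivity : (0:ℝ) ≤ _).trans (hb _ _ z 0))).2
      fun y => ?_
    rw [fbiT_apply, norm_smul, Complex.norm_real, norm_pow, norm_norm]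
    exact hb _ _ z y
  have hTT : Integrable (fun z => (fun i : s => W z • fbiT E i.1.1 i.1.2 (Φ z))) μ :=
    Integrable.of_eval hTi
  have h5 := ContinuousLinearMap.integral_comp_comm v hTT
  have h6 : ∀ z, v (fun i : s => W z • fbiT E i.1.1 i.1.2 (Φ z)) = W z * u (Φ z) := by
    intro z
    rw [hv, ← smul_eq_mul, ← map_smul]
    rfl
  simp only [h6] at h5
  rw [h5, hv]
  congr 1
  ext1 i
  rw [eval_integral hTi]
  ext1 y
  have h7 := ContinuousLinearMap.integral_comp_comm
    (BoundedContinuousFunction.evalCLM ℂ y) (hTi i)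
  refine h7.symm.trans ?_
  rw [fbiT_apply, ← hder, ← integral_smul]
  congr 1
  ext1 z
  rw [smul_comm]
  rfl

theorem fbi_iter_exp (i : ℕ) :
    iteratedDeriv i (fun s : ℝ => Complex.exp (-(Complex.I * (s : ℂ)))) =
      fun s : ℝ => (-Complex.I) ^ i * Complex.exp (-(Complex.I * (s : ℂ))) := by
  induction i with
  | zero => ext s; simp
  | succ i ih =>
    rw [iteratedDeriv_succ, ih]
    ext s
    have h1 : HasDerivAt (fun s : ℝ => -(Complex.I * (s : ℂ))) (-(Complex.I * 1)) s :=
      ((Complex.ofRealCLM.hasDerivAt (x := s)).const_mul Complex.I).neg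
    have h2 := (h1.cexp.const_mul ((-Complex.I) ^ i)).deriv
    rw [h2, pow_succ]
    ring

theorem fbi_norm_iter_exp {V : Type*} [NormedAddCommGroup V] [InnerProductSpace ℝ V]
    (ξ t : V) (i : ℕ) :
    ‖iteratedFDeriv ℝ i (fun t : V => Complex.exp (-(Complex.I * ((inner ℝ t ξ : ℝ) : ℂ)))) t‖
      ≤ ‖ξ‖ ^ i := by
  have hc : ContDiff ℝ i (fun s : ℝ => Complex.exp (-(Complex.I * (s : ℂ)))) := by
    have : ContDiff ℝ i (fun s : ℝ => (s : ℂ)) := Complex.ofRealCLM.contDiff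
    fun_prop
  have h := ContinuousLinearMap.iteratedFDeriv_comp_right (innerSL ℝ ξ) hc t (i := i) le_rfl
  have h0 : ((fun s : ℝ => Complex.exp (-(Complex.I * (s : ℂ)))) ∘ (innerSL ℝ ξ)) =
      (fun t : V => Complex.exp (-(Complex.I * ((inner ℝ t ξ : ℝ) : ℂ)))) := by
    ext t
    simp [real_inner_comm]
  rw [h0] at h
  rw [h]
  refine (ContinuousMultilinearMap.norm_compContinuousLinearMap_le _ _).trans ?_
  rw [norm_iteratedFDeriv_eq_norm_iteratedDeriv, fbi_iter_exp]
  have h3 : ‖Complex.exp (-(Complex.I * ((innerSL ℝ ξ t : ℝ) : ℂ)))‖ = 1 := by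
    rw [Complex.norm_exp]; simp
  simp only [norm_mul, norm_pow, norm_neg, Complex.norm_I, h3]
  simp

theorem fbi_decay {V : Type*} [NormedAddCommGroup V] [NormedSpace ℝ V]
    (f : SchwartzMap V ℂ) (k n : ℕ) :
    ∃ C, 0 ≤ C ∧ ∀ t, (1 + ‖t‖) ^ k * ‖iteratedFDeriv ℝ n f t‖ ≤ C :=
  ⟨2 ^ k * (Finset.Iic (k, n)).sup (fun m => SchwartzMap.seminorm ℝ m.1 m.2) f,
    by positivity,
    fun t => one_add_le_sup_seminorm_apply (m := (k, n)) le_rfl le_rfl f t⟩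

theorem fbi_window_bound {V : Type*} [NormedAddCommGroup V] [InnerProductSpace ℝ V]
    (gc : SchwartzMap V ℂ) (k n : ℕ) :
    ∃ C, 0 ≤ C ∧ ∀ x ξ y : V, ‖y‖ ^ k * ‖iteratedFDeriv ℝ n
      (fun y : V => Complex.exp (-(Complex.I * ((inner ℝ (y - x) ξ : ℝ) : ℂ))) * gc (y - x)) y‖
      ≤ C * ((1 + ‖x‖) ^ k * (1 + ‖ξ‖) ^ n) := by
  choose D hD0 hD using fun i => fbi_decay gc k i
  refine ⟨∑ i ∈ Finset.range (n + 1), (n.choose i : ℝ) * D (n - i),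
    Finset.sum_nonneg fun i _ => mul_nonneg (by positivity) (hD0 _), fun x ξ y => ?_⟩
  have h1 := iteratedFDeriv_comp_sub (𝕜 := ℝ)
    (f := fun t : V => Complex.exp (-(Complex.I * ((inner ℝ t ξ : ℝ) : ℂ))) * gc t) n x y
  rw [h1]
  set t := y - x with ht
  have hc : ContDiff ℝ n (fun t : V => Complex.exp (-(Complex.I * ((inner ℝ t ξ : ℝ) : ℂ)))) := by
    have h2 : ContDiff ℝ n (fun t : V => ((inner ℝ t ξ : ℝ) : ℂ)) :=
      Complex.ofRealCLM.contDiff.comp (contDiff_id.inner ℝ contDiff_const)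
    fun_prop
  have h2 := norm_iteratedFDeriv_mul_le hc (gc.smooth n) t (n := n) le_rfl
  have hy : ‖y‖ ^ k ≤ (1 + ‖x‖) ^ k * (1 + ‖t‖) ^ k := by
    rw [← mul_pow]
    refine pow_le_pow_left₀ (norm_nonneg _) ?_ k
    have : ‖y‖ ≤ ‖t‖ + ‖x‖ := by
      have := norm_add_le t x
      rwa [ht, sub_add_cancel] at this
    nlinarith [norm_nonneg x, norm_nonneg t]
  calc _ ≤ ((1 + ‖x‖) ^ k * (1 + ‖t‖) ^ k) * ∑ i ∈ Finset.range (n + 1), (n.choose i : ℝ) *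
        ‖iteratedFDeriv ℝ i (fun t : V =>
          Complex.exp (-(Complex.I * ((inner ℝ t ξ : ℝ) : ℂ)))) t‖ *
          ‖iteratedFDeriv ℝ (n - i) gc t‖ := by gcongr
    _ ≤ _ := by
      rw [Finset.mul_sum, Finset.sum_mul]
      refine Finset.sum_le_sum fun i hi => ?_
      have hi' : i ≤ n := by simpa [Nat.lt_succ_iff] using hi
      have h3 : ‖iteratedFDeriv ℝ i (fun t : V =>
          Complex.exp (-(Complex.I * ((inner ℝ t ξ : ℝ) : ℂ)))) t‖ ≤ (1 + ‖ξ‖) ^ n := by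
        refine (fbi_norm_iter_exp ξ t i).trans ?_
        calc ‖ξ‖ ^ i ≤ (1 + ‖ξ‖) ^ i := by gcongr; linarith
          _ ≤ _ := pow_le_pow_right₀ (by linarith [norm_nonneg ξ]) hi'
      calc _ = (n.choose i : ℝ) * (1 + ‖x‖) ^ k * ‖iteratedFDeriv ℝ i (fun t : V =>
          Complex.exp (-(Complex.I * ((inner ℝ t ξ : ℝ) : ℂ)))) t‖ *
            ((1 + ‖t‖) ^ k * ‖iteratedFDeriv ℝ (n - i) gc t‖) := by ring
        _ ≤ (n.choose i : ℝ) * (1 + ‖x‖) ^ k * (1 + ‖ξ‖) ^ n * D (n - i) := by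
          gcongr
          exact hD _ t
        _ = _ := by ring

theorem fbi_pair_bound {V : Type*} [NormedAddCommGroup V] [NormedSpace ℝ V]
    (f h : SchwartzMap V ℂ) (m k n : ℕ) :
    ∃ C, 0 ≤ C ∧ ∀ x t : V, (1 + ‖x‖) ^ m * (‖t‖ ^ k * ‖iteratedFDeriv ℝ n
      (fun t : V => f (t + x) * h t) t‖) ≤ C := by
  choose D hD0 hD using fun i => fbi_decay f m i
  choose H hH0 hH using fun i => fbi_decay h (m + k) i
  refine ⟨∑ i ∈ Finset.range (n + 1), (n.choose i : ℝ) * D i * H (n - i),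
    Finset.sum_nonneg fun i _ => mul_nonneg (mul_nonneg (by positivity) (hD0 _)) (hH0 _),
    fun x t => ?_⟩
  have hc : ContDiff ℝ n (fun t : V => f (t + x)) :=
    (f.smooth n).comp (contDiff_id.add contDiff_const)
  have h2 := norm_iteratedFDeriv_mul_le hc (h.smooth n) t (n := n) le_rfl
  have hx : (1 + ‖x‖) ^ m ≤ (1 + ‖t + x‖) ^ m * (1 + ‖t‖) ^ m := by
    rw [← mul_pow]
    refine pow_le_pow_left₀ (by positivity) ?_ m
    have : ‖x‖ ≤ ‖t + x‖ + ‖t‖ := by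
      have := norm_sub_le (t + x) t
      rwa [add_sub_cancel_left] at this
    nlinarith [norm_nonneg (t + x), norm_nonneg t]
  have ht : ‖t‖ ^ k ≤ (1 + ‖t‖) ^ k := by gcongr; linarith
  calc _ ≤ ((1 + ‖t + x‖) ^ m * (1 + ‖t‖) ^ m) * ((1 + ‖t‖) ^ k *
        ∑ i ∈ Finset.range (n + 1), (n.choose i : ℝ) *
        ‖iteratedFDeriv ℝ i (fun t : V => f (t + x)) t‖ *
          ‖iteratedFDeriv ℝ (n - i) h t‖) := by gcongr
    _ ≤ _ := by
      rw [Finset.mul_sum, Finset.mul_sum]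
      refine Finset.sum_le_sum fun i hi => ?_
      rw [iteratedFDeriv_comp_add_right]
      calc _ = (n.choose i : ℝ) * ((1 + ‖t + x‖) ^ m * ‖iteratedFDeriv ℝ i f (t + x)‖) *
            ((1 + ‖t‖) ^ (m + k) * ‖iteratedFDeriv ℝ (n - i) h t‖) := by ring
        _ ≤ _ := by
          gcongr
          · exact mul_nonneg (by positivity) (hD0 _)
          · exact hD _ _
          · exact hH _ _

/-- joint continuity of the derivatives of the window -/
theorem fbi_window_cont {V : Type*} [NormedAddCommGroup V] [InnerProductSpace ℝ V]
    (gc : SchwartzMap V ℂ) (n : ℕ) :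
    Continuous fun p : (V × V) × V => iteratedFDeriv ℝ n
      (fun y : V => Complex.exp (-(Complex.I * ((inner ℝ (y - p.1.1) p.1.2 : ℝ) : ℂ))) *
        gc (y - p.1.1)) p.2 := by
  let K : (V × V) × V → ℂ := fun p =>
    Complex.exp (-(Complex.I * ((inner ℝ (p.2 - p.1.1) p.1.2 : ℝ) : ℂ))) * gc (p.2 - p.1.1)
  have hK : ContDiff ℝ n K := by
    have h1 : ContDiff ℝ n (fun p : (V × V) × V => p.2 - p.1.1) := by fun_prop
    have h2 : ContDiff ℝ n (fun p : (V × V) × V => ((inner ℝ (p.2 - p.1.1) p.1.2 : ℝ) : ℂ)) :=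
      Complex.ofRealCLM.contDiff.comp (h1.inner ℝ (by fun_prop))
    have h3 : ContDiff ℝ n (fun p : (V × V) × V => gc (p.2 - p.1.1)) := (gc.smooth n).comp h1
    exact ContDiff.mul (by fun_prop) h3
  have h4 : ∀ p : (V × V) × V, iteratedFDeriv ℝ n
      (fun y : V => Complex.exp (-(Complex.I * ((inner ℝ (y - p.1.1) p.1.2 : ℝ) : ℂ))) *
        gc (y - p.1.1)) p.2 = (iteratedFDeriv ℝ n K p).compContinuousLinearMap
          (fun _ => ContinuousLinearMap.inr ℝ (V × V) V) := by
    intro p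
    have h5 : ContDiff ℝ n (fun q => K ((p.1, 0) + q)) := hK.comp (contDiff_const.add contDiff_id)
    have h6 := ContinuousLinearMap.iteratedFDeriv_comp_right
      (ContinuousLinearMap.inr ℝ (V × V) V) h5 p.2 (i := n) le_rfl
    rw [iteratedFDeriv_comp_add_left] at h6
    have h7 : ((p.1, 0) + (ContinuousLinearMap.inr ℝ (V × V) V) p.2 : (V × V) × V) = p := by
      ext <;> simp
    rw [h7] at h6
    rw [← h6]
    congr 1
    ext y
    simp [K]
  simp only [h4]
  exact (ContinuousMultilinearMap.compContinuousLinearMapL (𝕜 := ℝ) (F := ℂ)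
    (fun _ : Fin n => ContinuousLinearMap.inr ℝ (V × V) V)).continuous.comp
      (hK.continuous_iteratedFDeriv le_rfl)

open scoped FourierTransform in
theorem fbi_W_eq {V : Type*} [NormedAddCommGroup V] [InnerProductSpace ℝ V]
    [FiniteDimensional ℝ V] [MeasurableSpace V] [BorelSpace V]
    (f h ψ : SchwartzMap V ℂ) (x ξ : V) (hψ : ∀ t, ψ t = f (t + x) * h t) :
    ∫ y, f y * (Complex.exp (Complex.I * ((inner ℝ (y - x) ξ : ℝ) : ℂ)) * h (y - x)) =
      (𝓕⁻ ψ) ((2 * Real.pi)⁻¹ • ξ) := by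
  rw [SchwartzMap.fourierInv_coe, Real.fourierInv_eq']
  rw [← integral_sub_right_eq_self (fun v : V =>
    Complex.exp (((2 * Real.pi * inner ℝ v ((2 * Real.pi)⁻¹ • ξ) : ℝ) : ℂ) * Complex.I) • ψ v) x]
  congr 1
  ext1 y
  rw [hψ, sub_add_cancel, inner_smul_right, smul_eq_mul]
  have : 2 * Real.pi * ((2 * Real.pi)⁻¹ * inner ℝ (y - x) ξ) = inner ℝ (y - x) ξ := by
    field_simp
  rw [this, mul_comm Complex.I]
  ring

open scoped FourierTransform in
theorem fbi_inv {V : Type*} [NormedAddCommGroup V] [InnerProductSpace ℝ V]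
    [FiniteDimensional ℝ V] [MeasurableSpace V] [BorelSpace V]
    (ψ : SchwartzMap V ℂ) (t : V) :
    ∫ ξ : V, (𝓕⁻ ψ) ((2 * Real.pi)⁻¹ • ξ) *
      Complex.exp (-(Complex.I * ((inner ℝ t ξ : ℝ) : ℂ))) =
      (((2 * Real.pi) ^ (Module.finrank ℝ V) : ℝ) : ℂ) * ψ t := by
  have h1 := Measure.integral_comp_smul (volume : Measure V) (fun η => (𝓕⁻ ψ) η *
      Complex.exp (-(2 * Real.pi * Complex.I * ((inner ℝ t η : ℝ) : ℂ)))) ((2 * Real.pi)⁻¹)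
  have h2 : ψ t = ∫ η, (𝓕⁻ ψ) η *
      Complex.exp (-(2 * Real.pi * Complex.I * ((inner ℝ t η : ℝ) : ℂ))) := by
    conv_lhs => rw [← FourierTransform.fourier_fourierInv_eq (F := SchwartzMap V ℂ) ψ]
    rw [SchwartzMap.fourier_coe, Real.fourier_eq']
    congr 1
    ext1 η
    rw [smul_eq_mul, mul_comm, real_inner_comm]
    congr 2
    push_cast
    ring
  rw [← h2] at h1
  have h3 : |(((2 * Real.pi)⁻¹ : ℝ) ^ (Module.finrank ℝ V))⁻¹| =
      (2 * Real.pi) ^ (Module.finrank ℝ V) := by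
    rw [inv_pow, inv_inv, abs_of_pos (by positivity)]
  rw [h3, Complex.real_smul] at h1
  rw [← h1]
  congr 1
  ext1 ξ
  rw [inner_smul_right]
  congr 3
  push_cast
  have : (Real.pi : ℂ) ≠ 0 := by exact_mod_cast Real.pi_ne_zero
  field_simp

open scoped FourierTransform in
theorem fbi_W_bound {V : Type*} [NormedAddCommGroup V] [InnerProductSpace ℝ V]
    [FiniteDimensional ℝ V] [MeasurableSpace V] [BorelSpace V]
    (f h : SchwartzMap V ℂ) (ψ : V → SchwartzMap V ℂ) (hψ : ∀ x t, ψ x t = f (t + x) * h t)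
    (m : ℕ) :
    ∃ C, 0 ≤ C ∧ ∀ x ξ, (1 + ‖x‖) ^ m * ((1 + ‖ξ‖) ^ m *
      ‖(𝓕⁻ (ψ x)) ((2 * Real.pi)⁻¹ • ξ)‖) ≤ C := by
  let q : Seminorm ℂ (SchwartzMap V ℂ) :=
    (Finset.Iic (m, 0)).sup (fun m => SchwartzMap.seminorm ℂ m.1 m.2)
  have hq : Continuous q :=
    Seminorm.continuous_finsetSup fun i _ => (schwartz_withSeminorms ℂ V ℂ).continuous_seminorm i
  obtain ⟨s, C, -, hb⟩ := Seminorm.bound_of_continuous (schwartz_withSeminorms ℂ V ℂ)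
    (q.comp (FourierTransform.fourierInvCLM ℂ (SchwartzMap V ℂ)).toLinearMap)
    (hq.comp (FourierTransform.fourierInvCLM ℂ (SchwartzMap V ℂ)).continuous)
  choose D hD0 hD using fun i : ℕ × ℕ => fbi_pair_bound f h m i.1 i.2
  have hcoe : ∀ x, (ψ x : V → ℂ) = fun t => f (t + x) * h t := fun x => by ext t; exact hψ x t
  refine ⟨(2 * Real.pi) ^ m * (2 ^ m * (C * ∑ i ∈ s, D i)), ?_, fun x ξ => ?_⟩
  · have := Finset.sum_nonneg fun i (_ : i ∈ s) => hD0 i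
    positivity
  set η := (2 * Real.pi)⁻¹ • ξ with hη
  have h1 : (1 + ‖η‖) ^ m * ‖(𝓕⁻ (ψ x)) η‖ ≤ 2 ^ m * q (𝓕⁻ (ψ x)) := by
    have := one_add_le_sup_seminorm_apply (𝕜 := ℂ) (m := (m, 0)) (k := m) (n := 0)
      le_rfl le_rfl (𝓕⁻ (ψ x)) η
    simpa using this
  have h2 : q (𝓕⁻ (ψ x)) ≤ C * (s.sup (schwartzSeminormFamily ℂ V ℂ)) (ψ x) := hb (ψ x)
  have h3 : (1 + ‖x‖) ^ m * (s.sup (schwartzSeminormFamily ℂ V ℂ)) (ψ x) ≤ ∑ i ∈ s, D i := by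
    rw [← le_div_iff₀' (by positivity)]
    have h0 := Finset.sum_nonneg fun i (_ : i ∈ s) => hD0 i
    refine Seminorm.finset_sup_apply_le (by positivity) fun i hi => ?_
    refine SchwartzMap.seminorm_le_bound ℂ i.1 i.2 _ (by positivity) fun t => ?_
    rw [le_div_iff₀' (by positivity), hcoe]
    exact (hD i x t).trans (Finset.single_le_sum (f := D) (fun j _ => hD0 j) hi)
  have h4 : (1 + ‖ξ‖) ^ m ≤ (2 * Real.pi) ^ m * (1 + ‖η‖) ^ m := by
    rw [← mul_pow]
    refine pow_le_pow_left₀ (by positivity) ?_ m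
    have : ‖ξ‖ = 2 * Real.pi * ‖η‖ := by
      rw [hη, norm_smul, Real.norm_of_nonneg (by positivity)]
      field_simp
    rw [this]
    nlinarith [Real.pi_gt_three]
  calc _ ≤ (1 + ‖x‖) ^ m * ((2 * Real.pi) ^ m * (1 + ‖η‖) ^ m * ‖(𝓕⁻ (ψ x)) η‖) := by gcongr
    _ = (1 + ‖x‖) ^ m * (2 * Real.pi) ^ m * ((1 + ‖η‖) ^ m * ‖(𝓕⁻ (ψ x)) η‖) := by ring
    _ ≤ (1 + ‖x‖) ^ m * (2 * Real.pi) ^ m * (2 ^ m *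
        (C * (s.sup (schwartzSeminormFamily ℂ V ℂ)) (ψ x))) := by
      refine mul_le_mul_of_nonneg_left ?_ (by positivity)
      exact h1.trans (by gcongr)
    _ = (2 * Real.pi) ^ m * (2 ^ m * (C * ((1 + ‖x‖) ^ m *
        (s.sup (schwartzSeminormFamily ℂ V ℂ)) (ψ x)))) := by ring
    _ ≤ _ := by gcongr

theorem fbi_weight_integrable {V : Type*} [NormedAddCommGroup V] [InnerProductSpace ℝ V]
    [FiniteDimensional ℝ V] [MeasurableSpace V] [BorelSpace V]
    (W : V × V → ℂ) (hW : AEStronglyMeasurable W)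
    (hb : ∀ m : ℕ, ∃ C, 0 ≤ C ∧ ∀ x ξ, (1 + ‖x‖) ^ m * ((1 + ‖ξ‖) ^ m * ‖W (x, ξ)‖) ≤ C)
    (c : ℝ) (hc : 0 ≤ c) (k n : ℕ) :
    Integrable (fun z : V × V => ‖W z‖ * (c * ((1 + ‖z.1‖) ^ k * (1 + ‖z.2‖) ^ n))) := by
  set r : ℕ := Module.finrank ℝ V + 1 with hr
  obtain ⟨C, hC0, hC⟩ := hb (k + n + r)
  have h1 : Integrable (fun x : V => (1 + ‖x‖) ^ (-(r : ℝ))) :=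
    integrable_one_add_norm (by rw [hr]; push_cast; linarith)
  have h2 := (h1.mul_prod h1).const_mul (C * c)
  refine Integrable.mono' h2 ?_ ?_
  · exact hW.norm.mul (by fun_prop : Continuous fun z : V × V =>
      (c * ((1 + ‖z.1‖) ^ k * (1 + ‖z.2‖) ^ n))).aestronglyMeasurable
  refine Eventually.of_forall fun z => ?_
  obtain ⟨x, ξ⟩ := z
  have hx : (1:ℝ) ≤ 1 + ‖x‖ := by linarith [norm_nonneg x]
  have hξ : (1:ℝ) ≤ 1 + ‖ξ‖ := by linarith [norm_nonneg ξ]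
  rw [Real.norm_of_nonneg (by positivity)]
  simp only
  rw [Real.rpow_neg (by positivity), Real.rpow_neg (by positivity), Real.rpow_natCast,
    Real.rpow_natCast, ← mul_inv, ← div_eq_mul_inv, le_div_iff₀ (by positivity)]
  calc _ = c * (((1 + ‖x‖) ^ (k + r)) * ((1 + ‖ξ‖) ^ (n + r) * ‖W (x, ξ)‖)) := by ring
    _ ≤ c * (((1 + ‖x‖) ^ (k + n + r)) * ((1 + ‖ξ‖) ^ (k + n + r) * ‖W (x, ξ)‖)) := by
      have e1 : (1 + ‖x‖) ^ (k + r) ≤ (1 + ‖x‖) ^ (k + n + r) :=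
        pow_le_pow_right₀ hx (by omega)
      have e2 : (1 + ‖ξ‖) ^ (n + r) ≤ (1 + ‖ξ‖) ^ (k + n + r) :=
        pow_le_pow_right₀ hξ (by omega)
      gcongr c * (?_ * (?_ * _))
    _ ≤ c * C := by gcongr; exact hC x ξ
    _ = C * c := mul_comm _ _

theorem fbi_main {V : Type*} [NormedAddCommGroup V] [InnerProductSpace ℝ V]
    [FiniteDimensional ℝ V] [MeasurableSpace V] [BorelSpace V]
    (gc f h : SchwartzMap V ℂ) (u : SchwartzMap V ℂ →L[ℂ] ℂ) (φ : V → V → SchwartzMap V ℂ)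
    (hφ : ∀ x ξ y, φ x ξ y =
      Complex.exp (-(Complex.I * ((inner ℝ (y - x) ξ : ℝ) : ℂ))) * gc (y - x)) :
    ∫ z : V × V, (∫ y, f y * (Complex.exp (Complex.I * ((inner ℝ (y - z.1) z.2 : ℝ) : ℂ)) *
      h (y - z.1))) * u (φ z.1 z.2) =
      (((2 * Real.pi) ^ (Module.finrank ℝ V) : ℝ) : ℂ) * (∫ y, h y * gc y) * u f := by
  have hφc : ∀ z : V × V, (φ z.1 z.2 : V → ℂ) = fun y =>
      Complex.exp (-(Complex.I * ((inner ℝ (y - z.1) z.2 : ℝ) : ℂ))) * gc (y - z.1) :=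
    fun z => by ext y; exact hφ _ _ _
  let ψ : V → SchwartzMap V ℂ := fun x =>
    SchwartzMap.pairing (ContinuousLinearMap.mul ℂ ℂ) (SchwartzMap.compSubConstCLM ℂ (-x) f) h
  have hψ : ∀ x t, ψ x t = f (t + x) * h t := fun x t => by simp [ψ]
  have hWψ := fun x ξ => fbi_W_eq f h (ψ x) x ξ (hψ x)
  set W : V × V → ℂ := fun z => ∫ y, f y *
    (Complex.exp (Complex.I * ((inner ℝ (y - z.1) z.2 : ℝ) : ℂ)) * h (y - z.1)) with hWdef
  have hWm : AEStronglyMeasurable W := by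
    refine StronglyMeasurable.aestronglyMeasurable ?_
    refine StronglyMeasurable.integral_prod_right (f := fun (z : V × V) (y : V) => f y *
      (Complex.exp (Complex.I * ((inner ℝ (y - z.1) z.2 : ℝ) : ℂ)) * h (y - z.1))) ?_
    refine Continuous.stronglyMeasurable ?_
    have h1 := f.continuous
    have h2 := h.continuous
    simp only [Function.uncurry_def]
    fun_prop
  have hWb : ∀ m : ℕ, ∃ C, 0 ≤ C ∧
      ∀ x ξ, (1 + ‖x‖) ^ m * ((1 + ‖ξ‖) ^ m * ‖W (x, ξ)‖) ≤ C := by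
    intro m
    obtain ⟨C, hC0, hC⟩ := fbi_W_bound f h ψ hψ m
    refine ⟨C, hC0, fun x ξ => ?_⟩
    have := hC x ξ
    rwa [← hWψ] at this
  choose D hD0 hD using fun k n => fbi_window_bound gc k n
  have hbi : ∀ k n, Integrable (fun z : V × V =>
      ‖W z‖ * (D k n * ((1 + ‖z.1‖) ^ k * (1 + ‖z.2‖) ^ n))) :=
    fun k n => fbi_weight_integrable W hWm hWb _ (hD0 k n) k n
  have hb : ∀ k n (z : V × V) y, ‖y‖ ^ k * ‖iteratedFDeriv ℝ n (φ z.1 z.2) y‖ ≤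
      D k n * ((1 + ‖z.1‖) ^ k * (1 + ‖z.2‖) ^ n) := by
    intro k n z y
    rw [hφc]
    exact hD k n z.1 z.2 y
  have hcont : ∀ n, Continuous fun p : (V × V) × V =>
      iteratedFDeriv ℝ n (φ p.1.1 p.1.2) p.2 := by
    intro n
    have := fbi_window_cont gc n
    refine this.congr fun p => ?_
    rw [hφc p.1]
  have key := fbi_swap (volume : Measure (V × V)) (fun z => φ z.1 z.2) hcont
    (fun k n z => D k n * ((1 + ‖z.1‖) ^ k * (1 + ‖z.2‖) ^ n)) (fun k n => by fun_prop) hb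
    W hWm hbi
    (((((2 * Real.pi) ^ (Module.finrank ℝ V) : ℝ) : ℂ) * (∫ y, h y * gc y)) • f) ?_ u
  · rw [key, map_smul, smul_eq_mul]
  intro y
  have hint : Integrable (fun z : V × V => W z * φ z.1 z.2 y) := by
    refine (hbi 0 0).mono' (hWm.mul ?_) (Eventually.of_forall fun z => ?_)
    · have h2 := gc.continuous
      simp only [hφ]
      exact (by fun_prop : Continuous _).aestronglyMeasurable
    · rw [norm_mul]
      have := hb 0 0 z y
      simp only [pow_zero, one_mul, norm_iteratedFDeriv_zero] at this
      simp only [pow_zero, one_mul]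
      gcongr
  rw [Measure.volume_eq_prod] at hint ⊢
  rw [integral_prod _ hint]
  have hin : ∀ x, ∫ ξ, W (x, ξ) * φ x ξ y =
      ((((2 * Real.pi) ^ (Module.finrank ℝ V) : ℝ) : ℂ) * f y) * (h (y - x) * gc (y - x)) := by
    intro x
    have h1 := fbi_inv (ψ x) (y - x)
    rw [hψ, sub_add_cancel] at h1
    calc _ = ∫ ξ, (W (x, ξ) * Complex.exp (-(Complex.I * ((inner ℝ (y - x) ξ : ℝ) : ℂ)))) *
          gc (y - x) := by
          congr 1; ext1 ξ; rw [hφ]; ring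
      _ = _ := by
          rw [integral_mul_const]
          simp only [hWdef, hWψ]
          rw [h1]
          ring
  simp only [hin]
  rw [integral_const_mul, integral_sub_left_eq_self (fun t => h t * gc t) volume y]
  simp only [SchwartzMap.smul_apply, smul_eq_mul]
  ring

end FBIAux

open RealInnerProductSpace MeasureTheory in
/-- Inversion formula for the FBI-type transform `𝒯_g u(x,ξ) = (2π)^{-d/2}(u, T_x M_ξ g)`:
for `g, h ∈ 𝒮(ℝ^d)` and `u ∈ 𝒮'(ℝ^d)` one has `𝒯_h^* 𝒯_g u = (h,g)_{L²} u`, and in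
particular, if `g ≠ 0`, then `‖g‖_{L²}^{-2} 𝒯_g^* 𝒯_g u = u`. The identities are stated
weakly: both sides are paired sesquilinearly with an arbitrary test function `f`, the
pairing `(u, f)` being realized as `u` applied to the conjugate `fc` of `f`, the pairing
defining the adjoint being `(𝒯_h^* U, f) = (U, 𝒯_h f)`, and the sesquilinear pairing of the
window `(u, T_x M_ξ g)` realized by the conjugated window `φ x ξ : y ↦ conj((T_x M_ξ g)(y))`. -/
theorem fbi_inversion (d : ℕ)
    (g h : SchwartzMap (EuclideanSpace ℝ (Fin d)) ℂ)
    (u : SchwartzMap (EuclideanSpace ℝ (Fin d)) ℂ →L[ℂ] ℂ)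
    (φ : EuclideanSpace ℝ (Fin d) → EuclideanSpace ℝ (Fin d) →
      SchwartzMap (EuclideanSpace ℝ (Fin d)) ℂ)
    (hφ : ∀ x ξ y, φ x ξ y =
      starRingEnd ℂ (Complex.exp (Complex.I * (⟪y - x, ξ⟫ : ℝ)) * g (y - x))) :
    (∀ f fc : SchwartzMap (EuclideanSpace ℝ (Fin d)) ℂ,
      (∀ y, fc y = starRingEnd ℂ (f y)) →
      (∫ z : EuclideanSpace ℝ (Fin d) × EuclideanSpace ℝ (Fin d),
          ((((2 * Real.pi) ^ (-(d : ℝ) / 2) : ℝ) : ℂ) * u (φ z.1 z.2)) *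
            starRingEnd ℂ ((((2 * Real.pi) ^ (-(d : ℝ) / 2) : ℝ) : ℂ) *
              ∫ y, f y * starRingEnd ℂ
                (Complex.exp (Complex.I * (⟪y - z.1, z.2⟫ : ℝ)) * h (y - z.1)))) =
        (∫ y, h y * starRingEnd ℂ (g y)) * u fc) ∧
    (g ≠ 0 → h = g →
      ∀ f fc : SchwartzMap (EuclideanSpace ℝ (Fin d)) ℂ,
      (∀ y, fc y = starRingEnd ℂ (f y)) →
      ((∫ y, ‖g y‖ ^ 2 : ℝ))⁻¹ •
        (∫ z : EuclideanSpace ℝ (Fin d) × EuclideanSpace ℝ (Fin d),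
          ((((2 * Real.pi) ^ (-(d : ℝ) / 2) : ℝ) : ℂ) * u (φ z.1 z.2)) *
            starRingEnd ℂ ((((2 * Real.pi) ^ (-(d : ℝ) / 2) : ℝ) : ℂ) *
              ∫ y, f y * starRingEnd ℂ
                (Complex.exp (Complex.I * (⟪y - z.1, z.2⟫ : ℝ)) * g (y - z.1)))) =
        u fc) := by
  have hgc : ∀ y, φ 0 0 y = starRingEnd ℂ (g y) := fun y => by simp [hφ]
  have hφ' : ∀ x ξ y, φ x ξ y =
      Complex.exp (-(Complex.I * ((inner ℝ (y - x) ξ : ℝ) : ℂ))) * (φ 0 0) (y - x) := by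
    intro x ξ y
    rw [hgc, hφ, map_mul, ← Complex.exp_conj, map_mul, Complex.conj_I, Complex.conj_ofReal,
      neg_mul]
  have hmain : ∀ f fc : SchwartzMap (EuclideanSpace ℝ (Fin d)) ℂ,
      (∀ y, fc y = starRingEnd ℂ (f y)) →
      (∫ z : EuclideanSpace ℝ (Fin d) × EuclideanSpace ℝ (Fin d),
          ((((2 * Real.pi) ^ (-(d : ℝ) / 2) : ℝ) : ℂ) * u (φ z.1 z.2)) *
            starRingEnd ℂ ((((2 * Real.pi) ^ (-(d : ℝ) / 2) : ℝ) : ℂ) *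
              ∫ y, f y * starRingEnd ℂ
                (Complex.exp (Complex.I * (⟪y - z.1, z.2⟫ : ℝ)) * h (y - z.1)))) =
        (∫ y, h y * starRingEnd ℂ (g y)) * u fc := by
    intro f fc hfc
    have key := fbi_main (φ 0 0) fc h u φ hφ'
    have hpow : ((2 * Real.pi) ^ (-(d : ℝ) / 2) : ℝ) * ((2 * Real.pi) ^ (-(d : ℝ) / 2) : ℝ) *
        (2 * Real.pi) ^ d = 1 := by
      rw [← Real.rpow_add (by positivity), ← Real.rpow_natCast, ← Real.rpow_add (by positivity)]
      ring_nf
      simp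
    rw [finrank_euclideanSpace_fin] at key
    simp only [hgc] at key
    set c : ℝ := (2 * Real.pi) ^ (-(d : ℝ) / 2) with hc
    calc _ = ∫ z : EuclideanSpace ℝ (Fin d) × EuclideanSpace ℝ (Fin d), ((c * c : ℝ) : ℂ) *
          ((∫ y, fc y * (Complex.exp (Complex.I * ((inner ℝ (y - z.1) z.2 : ℝ) : ℂ)) *
            h (y - z.1))) * u (φ z.1 z.2)) := by
          congr 1
          ext1 z
          rw [map_mul, Complex.conj_ofReal, ← integral_conj]
          simp only [map_mul (starRingEnd ℂ) (f _), Complex.conj_conj, ← hfc]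
          push_cast
          ring
      _ = _ := by
          rw [integral_const_mul, key]
          have : ((c * c * (2 * Real.pi) ^ d : ℝ) : ℂ) = 1 := by rw [hpow]; simp
          rw [mul_assoc, ← mul_assoc, ← Complex.ofReal_mul, this, one_mul]
  refine ⟨hmain, fun hg hhg f fc hfc => ?_⟩
  have h1 := hmain f fc hfc
  rw [hhg] at h1
  rw [h1]
  have h2 : ∫ y, g y * starRingEnd ℂ (g y) = ((∫ y, ‖g y‖ ^ 2 : ℝ) : ℂ) := by
    rw [← integral_complex_ofReal]
    congr 1
    ext1 y
    rw [Complex.mul_conj, Complex.normSq_eq_norm_sq]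
  have h3 : (∫ y, ‖g y‖ ^ 2 : ℝ) ≠ 0 := by
    intro h0
    apply hg
    have hi : Integrable (fun y => ‖g y‖ ^ 2) := (g.memLp 2).integrable_norm_pow (by norm_num)
    rw [integral_eq_zero_iff_of_nonneg (fun y => by positivity) hi] at h0
    have hc : Continuous fun y => ‖g y‖ ^ 2 := by
      have := g.continuous
      fun_prop
    have h4 := hc.ae_eq_iff_eq volume (continuous_const (y := (0:ℝ))) |>.1 h0
    ext y
    have := congrFun h4 y
    simpa using this
  rw [h2, Complex.real_smul, ← mul_assoc, ← Complex.ofReal_mul, inv_mul_cancel₀ h3]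
  simp
end
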